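/- Fix integers m, n ≥ 1 and k with 1 ≤ k ≤ n, let x̃ ∈ ℝⁿ be k-sparse nonnegative, σ > 0 and C_w > 0. Let A be a random m×n matrix with i.i.d. standard normal N(0,1) entries and let v ∈ ℝᵐ be a random vector, independent of A, with i.i.d. N(0, σ²) entries. Set y = A·x̃ + v and ζ_obj(A, v) = inf { ‖y − A·x‖₂ : x ∈ ℝⁿ, ‖x‖₁ ≤ ‖x̃‖₁ }. Let g ∈ ℝᵐ, h ∈ ℝⁿ be independent standard normal vectors and assume E[ξ(σ, g, h, x̃)] ≥ 0. Assume moreover that, for some ε_C > 0, with probability at least 1 − e^{−ε_C·n} some minimizer x̂ of ζ_obj satisfies ‖x̂ − x̃‖₂ ≤ C_w. Then for all ε₁, ε₂, ε₃ ∈ (0,1): P( ζ_obj(A, v) ≥ (1 − ε₁)·E[ξ(σ, g, h, x̃)] − (ε₂ + ε₃)·√n ) ≥ 1 − 2·exp( −(ε₁·E[ξ(σ, g, h, x̃)])²/(2·(2·C_w² + σ²)) ) − exp( −ε₂²·n/(2·σ²) ) − exp( −ε₃²·n/(2·(C_w² + σ²)) ) − e^{−ε_C·n}. -/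

import Mathlib

open MeasureTheory ProbabilityTheory

noncomputable def e2norm {d : ℕ} (x : Fin d → ℝ) : ℝ := Real.sqrt (∑ i, x i ^ 2)

noncomputable def l1norm {d : ℕ} (x : Fin d → ℝ) : ℝ := ∑ i, |x i|

def kSparseNonneg (n k : ℕ) (x : Fin n → ℝ) : Prop :=
  (∀ i : Fin n, (i : ℕ) < n - k → x i = 0) ∧ ∀ i, 0 ≤ x i

/-- Product Gaussian measure on (g, h). -/
noncomputable def muGH (m n : ℕ) : Measure ((Fin m → ℝ) × (Fin n → ℝ)) :=
  (Measure.pi fun _ : Fin m => gaussianReal 0 1).prod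
    (Measure.pi fun _ : Fin n => gaussianReal 0 1)

/-- Product Gaussian measure on (A, v): A has i.i.d. N(0,1) entries, v has i.i.d. N(0,σ²) entries. -/
noncomputable def muAv (m n : ℕ) (σ : ℝ) :
    Measure ((Fin m → Fin n → ℝ) × (Fin m → ℝ)) :=
  (Measure.pi fun _ : Fin m => Measure.pi fun _ : Fin n => gaussianReal 0 1).prod
    (Measure.pi fun _ : Fin m => gaussianReal 0 (σ ^ 2).toNNReal)

/-- ‖y − A·x‖₂ with y = A·x̃ + v, for the sample ω = (A, v). -/
noncomputable def lassoVal (m n : ℕ) (xt : Fin n → ℝ)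
    (ω : (Fin m → Fin n → ℝ) × (Fin m → ℝ)) (x : Fin n → ℝ) : ℝ :=
  e2norm (fun i => ((∑ j, ω.1 i j * xt j) + ω.2 i) - ∑ j, ω.1 i j * x j)

/-- ζ_obj(A, v): the optimal value of the LASSO (1.9). -/
noncomputable def zetaObj (m n : ℕ) (xt : Fin n → ℝ)
    (ω : (Fin m → Fin n → ℝ) × (Fin m → ℝ)) : ℝ :=
  sInf {r : ℝ | ∃ x : Fin n → ℝ, l1norm x ≤ l1norm xt ∧ r = lassoVal m n xt ω x}

/-- ξ(σ, g, h, x̃) as a function of the Gaussian pair (g, h). -/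
noncomputable def xiFun (m n : ℕ) (σ Cw : ℝ) (xt : Fin n → ℝ)
    (p : (Fin m → ℝ) × (Fin n → ℝ)) : ℝ :=
  sInf ((fun w : Fin n → ℝ =>
      Real.sqrt (e2norm w ^ 2 + σ ^ 2) * e2norm p.1 + ∑ i, p.2 i * w i) ''
    {w : Fin n → ℝ | e2norm w ≤ Cw ∧ l1norm (xt + w) ≤ l1norm xt})

/-!
Writing `w = x - xt`, the residual of the LASSO is the image of `(w, -σ)` under the Gaussian matrix
`[A | v / σ]`, so the noise is just one more column. If the minimizer is within `Cw` of `xt`, then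
`ζ_obj` is at least the infimum of `‖G t‖` over certain vectors `t` of norm at most `√(Cw² + σ²)`,
`G` being standard Gaussian, and two facts suffice.

*Gordon's comparison.* The mean of this infimum is at least the mean of the infimum of
`‖t‖ ‖g‖ + ⟪t, h⟫`, which is the mean of `ξ`. Smooth the minimum over a finite net by a log-sum-exp
and the norm by `√(‖·‖² + δ²)`; along the rotation from one Gaussian process to the other the
derivative of the mean is, by Gaussian integration by parts, a difference of covariance terms of
constant sign.

*Concentration.* A `K`-Lipschitz function of a standard Gaussian vector is subgaussian with variance
proxy `(π K / 2)²`, by the rotation argument of Maurey and Pisier. Although this is larger than the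
optimal `K²`, the total deviation `s = ε₁ E[ξ] + (ε₂ + ε₃) √n` is at least twice the smaller of
`ε₁ E[ξ]` and `ε₃ √n`, and `(π / 2)² ≤ 2²`, so the tail at `s` is below one of the tails claimed.
-/

open ContinuousLinearMap (rotation)

section Lipschitz

open scoped NNReal

theorem lipschitzWith_iInf {α ι : Type*} [PseudoMetricSpace α] [Nonempty ι] {f : ι → α → ℝ}
    {K : ℝ≥0} (hf : ∀ i, LipschitzWith K (f i)) (hbdd : ∀ x, BddBelow (Set.range (f · x))) :
    LipschitzWith K fun x ↦ ⨅ i, f i x := by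
  refine .of_le_add_mul K fun x y ↦ ?_
  rw [← sub_le_iff_le_add]
  refine le_ciInf fun i ↦ sub_le_iff_le_add.mpr ((ciInf_le (hbdd x) i).trans ?_)
  exact (hf i).le_add_mul x y

theorem integrable_of_lipschitzWith {E : Type*} [NormedAddCommGroup E] [NormedSpace ℝ E]
    [MeasurableSpace E] [BorelSpace E] [CompleteSpace E] [SecondCountableTopology E]
    {μ : Measure E} [IsGaussian μ] {f : E → ℝ} {K : ℝ≥0} (hf : LipschitzWith K f) :
    Integrable f μ := by
  have hid : Integrable (fun x : E ↦ ‖x‖) μ := IsGaussian.integrable_id.norm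
  refine ((integrable_const ‖f 0‖).add (hid.const_mul K)).mono' hf.continuous.aestronglyMeasurable
    (.of_forall fun x ↦ ?_)
  have h := hf.norm_sub_le x 0
  rw [sub_zero] at h
  exact (norm_le_norm_add_norm_sub' _ _).trans (add_le_add_right h _)

end Lipschitz

section Rotation

variable {F : Type*} [NormedAddCommGroup F] [NormedSpace ℝ F]

theorem norm_rotation_apply_le (θ : ℝ) (p : F × F) :
    ‖rotation θ p‖ ≤ 2 * ‖p‖ := by
  have h {a b : ℝ} (ha : |a| ≤ 1) (hb : |b| ≤ 1) : ‖a • p.1 + b • p.2‖ ≤ 2 * ‖p‖ :=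
    calc ‖a • p.1 + b • p.2‖ ≤ |a| * ‖p.1‖ + |b| * ‖p.2‖ :=
          (norm_add_le _ _).trans_eq (by simp only [norm_smul, Real.norm_eq_abs])
      _ ≤ 1 * ‖p‖ + 1 * ‖p‖ := by gcongr <;> first | exact norm_fst_le p | exact norm_snd_le p
      _ = 2 * ‖p‖ := by ring
  exact max_le (h (Real.abs_cos_le_one θ) (Real.abs_sin_le_one θ))
    (h ((abs_neg _).trans_le (Real.abs_sin_le_one θ)) (Real.abs_cos_le_one θ))

theorem hasDerivAt_rotation_apply (θ : ℝ) (p : F × F) :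
    HasDerivAt (fun θ ↦ rotation θ p)
      ((rotation θ p).2, -(rotation θ p).1) θ := by
  have hc := Real.hasDerivAt_cos θ
  have hs := Real.hasDerivAt_sin θ
  convert! ((hc.smul_const p.1).add (hs.smul_const p.2)).prodMk
    ((hs.neg.smul_const p.1).add (hc.smul_const p.2)) using 2
  simp [ContinuousLinearMap.rotation_apply, add_comm]

end Rotation

section Comparison

variable {F : Type*} [NormedAddCommGroup F] [NormedSpace ℝ F]

theorem norm_apply_self_le {B : F →L[ℝ] F →L[ℝ] ℝ} {K : ℝ} (hB : ‖B‖ ≤ K) (u : F) :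
    ‖B u u‖ ≤ K * ‖u‖ ^ 2 := by
  simpa only [sq, mul_assoc] using B.le_of_opNorm₂_le_of_le hB (le_refl ‖u‖) (le_refl ‖u‖)

variable [MeasurableSpace F] [BorelSpace F] [CompleteSpace F] [SecondCountableTopology F]

theorem integral_comp_rotation {μ : Measure F} [IsGaussian μ] (hμ : μ[id] = 0) {f : F × F → ℝ}
    (hf : Continuous f) (θ : ℝ) :
    ∫ p, f (rotation θ p) ∂(μ.prod μ) = ∫ p, f p ∂(μ.prod μ) := by
  conv_rhs => rw [← IsGaussian.map_rotation_eq_self hμ θ]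
  exact (integral_map (by fun_prop) hf.aestronglyMeasurable).symm

theorem integrable_of_norm_le_one_add_norm_sq {μ : Measure F} [IsGaussian μ] {f : F → ℝ}
    (hf : Continuous f) {K : ℝ} (hK : ∀ x, ‖f x‖ ≤ K * (1 + ‖x‖ ^ 2)) : Integrable f μ := by
  have hsq : Integrable (fun x ↦ ‖x‖ ^ 2) μ :=
    (IsGaussian.memLp_two_id (μ := μ)).norm.integrable_sq
  exact (((integrable_const 1).add hsq).const_mul K).mono' hf.aestronglyMeasurable (.of_forall hK)

theorem hasDerivAt_integral_comp_rotation {ρ : Measure (F × F)} [IsGaussian ρ] {f : F × F → ℝ}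
    (hf : ContDiff ℝ 1 f) {K : ℝ} (hK : ∀ p, ‖f p‖ ≤ K * (1 + ‖p‖ ^ 2))
    (hK' : ∀ p, ‖fderiv ℝ f p‖ ≤ K * (1 + ‖p‖)) (θ : ℝ) :
    HasDerivAt (fun θ ↦ ∫ p, f (rotation θ p) ∂ρ)
      (∫ p, fderiv ℝ f (rotation θ p)
        ((rotation θ p).2, -(rotation θ p).1) ∂ρ) θ := by
  have hK0 : 0 ≤ K := by simpa using (norm_nonneg _).trans (hK 0)
  have hcont := hf.continuous
  have hcont' := hf.continuous_fderiv one_ne_zero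
  have hrot (p : F × F) (θ : ℝ) : 1 + ‖rotation θ p‖ ^ 2 ≤ 4 * (1 + ‖p‖ ^ 2) := by
    nlinarith [pow_le_pow_left₀ (norm_nonneg _) (norm_rotation_apply_le θ p) 2]
  have hbound (p : F × F) (θ : ℝ) : ‖fderiv ℝ f (rotation θ p)
      ((rotation θ p).2, -(rotation θ p).1)‖ ≤
      8 * K * (1 + ‖p‖ ^ 2) := by
    set q := rotation θ p
    calc _ ≤ K * (1 + ‖q‖) * ‖q‖ := (fderiv ℝ f q).le_of_opNorm_le_of_le (hK' q)
          (by simp [Prod.norm_def, max_comm])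
      _ = K * ((1 + ‖q‖) * ‖q‖) := by ring
      _ ≤ K * (2 * (1 + ‖q‖ ^ 2)) :=
        mul_le_mul_of_nonneg_left (by nlinarith [sq_nonneg (1 - ‖q‖)]) hK0
      _ ≤ K * (2 * (4 * (1 + ‖p‖ ^ 2))) := by gcongr K * (2 * ?_); exact hrot p θ
      _ = 8 * K * (1 + ‖p‖ ^ 2) := by ring
  have hint : Integrable (fun p ↦ f (rotation θ p)) ρ :=
    integrable_of_norm_le_one_add_norm_sq (K := K * 4) (by fun_prop) fun p ↦
      (hK _).trans ((mul_le_mul_of_nonneg_left (hrot p θ) hK0).trans_eq (mul_assoc ..).symm)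
  refine (hasDerivAt_integral_of_dominated_loc_of_deriv_le Filter.univ_mem
    (.of_forall fun θ ↦ (by fun_prop : Continuous _).aestronglyMeasurable) hint
    (by fun_prop : Continuous _).aestronglyMeasurable
    (.of_forall fun p θ _ ↦ hbound p θ)
    (integrable_of_norm_le_one_add_norm_sq (K := 8 * K) (by fun_prop) fun p ↦ ?_)
    (.of_forall fun p θ _ ↦ ?_)).2
  · rw [Real.norm_of_nonneg (by positivity)]
  · exact (hf.differentiable one_ne_zero _).hasFDerivAt.comp_hasDerivAt θ
      (hasDerivAt_rotation_apply θ p)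

-- The mean of `G x y` is unchanged under rotations of the pair `(x, y)`, so its derivative at the
-- angle `0` vanishes.
theorem integral_apply_self_eq_integral_fderiv {μ : Measure F} [IsGaussian μ] (hμ : μ[id] = 0)
    {G : F → StrongDual ℝ F} (hG : ContDiff ℝ 1 G) {K : ℝ} (hK : ∀ x, ‖G x‖ ≤ K)
    (hK' : ∀ x, ‖fderiv ℝ G x‖ ≤ K) :
    ∫ x, G x x ∂μ = ∫ x, ∫ u, fderiv ℝ G x u u ∂μ ∂μ := by
  have hK0 : 0 ≤ K := (norm_nonneg _).trans (hK 0)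
  have hcont := hG.continuous
  have hcont' := hG.continuous_fderiv one_ne_zero
  let f : F × F → ℝ := fun p ↦ G p.1 p.2
  have hf : ContDiff ℝ 1 f := by fun_prop
  have hfderiv (p u : F × F) : fderiv ℝ f p u = fderiv ℝ G p.1 u.1 p.2 + G p.1 u.2 := by
    have hG₁ := (hG.differentiable one_ne_zero p.1).hasFDerivAt.comp p hasFDerivAt_fst
    have hf₁ : HasFDerivAt f _ p := hG₁.clm_apply hasFDerivAt_snd
    rw [hf₁.fderiv]
    simp [add_comm]
  have hGle (p u : F × F) (h : ‖u‖ ≤ ‖p‖) : ‖G p.1 u.1‖ ≤ K * (1 + ‖p‖ ^ 2) :=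
    calc ‖G p.1 u.1‖ ≤ K * ‖p‖ :=
          (G p.1).le_of_opNorm_le_of_le (hK p.1) ((norm_fst_le u).trans h)
      _ ≤ K * (1 + ‖p‖ ^ 2) := by gcongr; nlinarith [sq_nonneg (1 - ‖p‖), norm_nonneg p]
  have hG'le (p : F × F) : ‖fderiv ℝ G p.1 p.2 p.2‖ ≤ K * (1 + ‖p‖ ^ 2) :=
    (norm_apply_self_le (hK' p.1) p.2).trans <| by
      gcongr; exact (pow_le_pow_left₀ (norm_nonneg _) (norm_snd_le p) 2).trans (by linarith)
  have hrot := hasDerivAt_integral_comp_rotation (ρ := μ.prod μ) (K := K) hf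
    (fun p ↦ hGle p p.swap (by simp [Prod.norm_def, max_comm])) (fun p ↦ ?_) 0
  · simp_rw [integral_comp_rotation hμ hf.continuous] at hrot
    have h0 : ∫ p, (fderiv ℝ G p.1 p.2 p.2 - G p.1 p.1) ∂μ.prod μ = 0 := by
      simpa [hfderiv, ContinuousLinearMap.rotation_apply, sub_eq_add_neg] using
        hrot.unique (hasDerivAt_const _ _)
    have hint₁ := integrable_of_norm_le_one_add_norm_sq (μ := μ.prod μ) (by fun_prop) hG'le
    have hint₂ := integrable_of_norm_le_one_add_norm_sq (μ := μ.prod μ)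
      (f := fun p ↦ G p.1 p.1) (by fun_prop) fun p ↦ hGle p p le_rfl
    rw [integral_sub hint₁ hint₂, integral_fun_fst (fun x ↦ G x x), integral_prod _ hint₁] at h0
    simpa using (sub_eq_zero.mp h0).symm
  · refine ContinuousLinearMap.opNorm_le_bound _ (by positivity) fun u ↦ ?_
    have h₁ := (fderiv ℝ G p.1).le_of_opNorm₂_le_of_le (hK' p.1) (norm_fst_le u) (norm_snd_le p)
    have h₂ := (G p.1).le_of_opNorm_le_of_le (hK p.1) (norm_snd_le u)
    rw [hfderiv]
    linarith [norm_add_le_of_le h₁ h₂]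

theorem continuous_integral_apply_self {μ : Measure F} [IsGaussian μ]
    {B : F → F →L[ℝ] F →L[ℝ] ℝ} (hB : Continuous B) {K : ℝ} (hK : ∀ z, ‖B z‖ ≤ K) :
    Continuous fun z ↦ ∫ u, B z u u ∂μ :=
  continuous_of_dominated (fun z ↦ (by fun_prop : Continuous _).aestronglyMeasurable)
    (fun z ↦ .of_forall (norm_apply_self_le (hK z)))
    ((IsGaussian.memLp_two_id (μ := μ)).norm.integrable_sq.const_mul K)
    (.of_forall fun u ↦ by fun_prop)

theorem integrable_integral_apply_self {ν : Measure F} [IsGaussian ν] {X : Type*}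
    [TopologicalSpace X] [MeasurableSpace X] [OpensMeasurableSpace X] {ρ : Measure X}
    [IsFiniteMeasure ρ] {B : F → F →L[ℝ] F →L[ℝ] ℝ} (hB : Continuous B) {K : ℝ}
    (hK : ∀ z, ‖B z‖ ≤ K) {Z : X → F} (hZ : Continuous Z) :
    Integrable (fun p ↦ ∫ u, B (Z p) u u ∂ν) ρ :=
  .of_bound (C := ∫ u, K * ‖u‖ ^ 2 ∂ν)
    ((continuous_integral_apply_self hB hK).comp hZ).aestronglyMeasurable
    (.of_forall fun _ ↦ norm_integral_le_of_norm_le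
      ((IsGaussian.memLp_two_id (μ := ν)).norm.integrable_sq.const_mul K)
      (.of_forall (norm_apply_self_le (hK _))))

theorem integral_fderiv_comp_smul_add_apply_self {μ : Measure F} [IsGaussian μ] (hμ : μ[id] = 0)
    {H : F → ℝ} (hH : ContDiff ℝ 2 H) {K : ℝ} (hK : ∀ x, ‖fderiv ℝ H x‖ ≤ K)
    (hK' : ∀ x, ‖fderiv ℝ (fderiv ℝ H) x‖ ≤ K) (c : ℝ) (a : F) :
    ∫ x, fderiv ℝ H (c • x + a) x ∂μ =
      c * ∫ x, ∫ u, fderiv ℝ (fderiv ℝ H) (c • x + a) u u ∂μ ∂μ := by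
  have hK0 : 0 ≤ K := (norm_nonneg _).trans (hK 0)
  have hH₁ : ContDiff ℝ 1 (fderiv ℝ H) := hH.fderiv_right le_rfl
  have hderiv (x : F) : HasFDerivAt (fun x ↦ fderiv ℝ H (c • x + a))
      (c • fderiv ℝ (fderiv ℝ H) (c • x + a)) x := by
    have h := (hH₁.differentiable one_ne_zero (c • x + a)).hasFDerivAt.comp x
      (((hasFDerivAt_id x).const_smul c).add_const a)
    simpa [Function.comp_def] using h
  have hstein := integral_apply_self_eq_integral_fderiv (K := K * (1 + |c|)) hμ
    (G := fun x ↦ fderiv ℝ H (c • x + a)) (by fun_prop)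
    (fun x ↦ (hK _).trans (le_mul_of_one_le_right hK0 (by simp)))
    (fun x ↦ by
      rw [(hderiv x).fderiv]
      calc _ ≤ |c| * ‖fderiv ℝ (fderiv ℝ H) (c • x + a)‖ := ContinuousLinearMap.opNorm_smul_le _ _
        _ ≤ (1 + |c|) * K := by gcongr; exacts [by simp, hK' _]
        _ = K * (1 + |c|) := mul_comm _ _)
  simpa [(hderiv _).fderiv, integral_const_mul] using hstein

theorem integrable_fderiv_apply {ρ : Measure (F × F)} [IsGaussian ρ] {H : F → ℝ}
    (hH : ContDiff ℝ 1 H) {K : ℝ} (hK : ∀ x, ‖fderiv ℝ H x‖ ≤ K) {Z U : F × F → F}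
    (hZ : Continuous Z) (hU : Continuous U) (hU' : ∀ p, ‖U p‖ ≤ ‖p‖) :
    Integrable (fun p ↦ fderiv ℝ H (Z p) (U p)) ρ := by
  have hK0 : 0 ≤ K := (norm_nonneg _).trans (hK 0)
  have hcont := hH.continuous_fderiv one_ne_zero
  refine integrable_of_norm_le_one_add_norm_sq (K := K) (by fun_prop) fun p ↦ ?_
  calc ‖fderiv ℝ H (Z p) (U p)‖ ≤ K * ‖p‖ :=
        (fderiv ℝ H (Z p)).le_of_opNorm_le_of_le (hK _) (hU' p)
    _ ≤ K * (1 + ‖p‖ ^ 2) := by gcongr; nlinarith [sq_nonneg (1 - ‖p‖), norm_nonneg p]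

theorem integral_fderiv_rotation {μ₀ μ₁ : Measure F} [IsGaussian μ₀]
    [IsGaussian μ₁] (hμ₀ : μ₀[id] = 0) (hμ₁ : μ₁[id] = 0) {H : F → ℝ} (hH : ContDiff ℝ 2 H)
    {K : ℝ} (hK : ∀ x, ‖fderiv ℝ H x‖ ≤ K) (hK' : ∀ x, ‖fderiv ℝ (fderiv ℝ H) x‖ ≤ K) (θ : ℝ) :
    ∫ p, fderiv ℝ H (rotation θ p).1 (rotation θ p).2 ∂(μ₀.prod μ₁) =
      Real.sin θ * Real.cos θ *
        ∫ p, (∫ u, fderiv ℝ (fderiv ℝ H) (rotation θ p).1 u u ∂μ₁ -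
          ∫ u, fderiv ℝ (fderiv ℝ H) (rotation θ p).1 u u ∂μ₀) ∂(μ₀.prod μ₁) := by
  have hH₁ : ContDiff ℝ 1 (fderiv ℝ H) := hH.fderiv_right le_rfl
  have hx := integrable_fderiv_apply (ρ := μ₀.prod μ₁) (hH.of_le one_le_two) hK
    (Z := fun p ↦ (rotation θ p).1) (by fun_prop) continuous_fst norm_fst_le
  have hy := integrable_fderiv_apply (ρ := μ₀.prod μ₁) (hH.of_le one_le_two) hK
    (Z := fun p ↦ (rotation θ p).1) (by fun_prop) continuous_snd norm_snd_le
  have hq (μ : Measure F) [IsGaussian μ] :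
      Integrable (fun p ↦ ∫ u, fderiv ℝ (fderiv ℝ H) (rotation θ p).1 u u ∂μ) (μ₀.prod μ₁) :=
    integrable_integral_apply_self (hH₁.continuous_fderiv one_ne_zero) hK' (by fun_prop)
  have hX : ∫ p, fderiv ℝ H (rotation θ p).1 p.1 ∂(μ₀.prod μ₁) = Real.cos θ *
      ∫ p, ∫ u, fderiv ℝ (fderiv ℝ H) (rotation θ p).1 u u ∂μ₀ ∂(μ₀.prod μ₁) := by
    rw [integral_prod_symm _ hx, integral_prod_symm _ (hq μ₀), ← integral_const_mul]
    exact integral_congr_ae (.of_forall fun y ↦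
      integral_fderiv_comp_smul_add_apply_self hμ₀ hH hK hK' _ (Real.sin θ • y))
  have hY : ∫ p, fderiv ℝ H (rotation θ p).1 p.2 ∂(μ₀.prod μ₁) = Real.sin θ *
      ∫ p, ∫ u, fderiv ℝ (fderiv ℝ H) (rotation θ p).1 u u ∂μ₁ ∂(μ₀.prod μ₁) := by
    rw [integral_prod _ hy, integral_prod _ (hq μ₁), ← integral_const_mul]
    refine integral_congr_ae (.of_forall fun x ↦ ?_)
    simpa only [ContinuousLinearMap.rotation_apply, add_comm (Real.cos θ • x)] using
      integral_fderiv_comp_smul_add_apply_self hμ₁ hH hK hK' _ (Real.cos θ • x)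
  calc ∫ p, fderiv ℝ H (rotation θ p).1 (rotation θ p).2 ∂(μ₀.prod μ₁)
      = ∫ p, (Real.cos θ * fderiv ℝ H (rotation θ p).1 p.2 -
          Real.sin θ * fderiv ℝ H (rotation θ p).1 p.1) ∂(μ₀.prod μ₁) := by
        congr! 2 with p
        simp [ContinuousLinearMap.rotation_apply, sub_eq_neg_add]
    _ = _ := by
        rw [integral_sub (hy.const_mul _) (hx.const_mul _), integral_sub (hq μ₁) (hq μ₀),
          integral_const_mul, integral_const_mul, hX, hY]
        ring

theorem hasDerivAt_integral_comp_rotation_fst {ρ : Measure (F × F)} [IsGaussian ρ] {H : F → ℝ}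
    (hH : ContDiff ℝ 1 H) {K : ℝ} (hK : ∀ x, ‖fderiv ℝ H x‖ ≤ K) (θ : ℝ) :
    HasDerivAt (fun θ ↦ ∫ p, H (rotation θ p).1 ∂ρ)
      (∫ p, fderiv ℝ H (rotation θ p).1 (rotation θ p).2 ∂ρ) θ := by
  have hfderiv (p : F × F) : HasFDerivAt (fun p : F × F ↦ H p.1)
      (fderiv ℝ H p.1 ∘L .fst ℝ F F) p :=
    (hH.differentiable one_ne_zero p.1).hasFDerivAt.comp p hasFDerivAt_fst
  have hK0 : 0 ≤ K := (norm_nonneg _).trans (hK 0)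
  have hgrowth (p : F × F) : ‖H p.1‖ ≤ (‖H 0‖ + K) * (1 + ‖p‖ ^ 2) := by
    have hlip := convex_univ.norm_image_sub_le_of_norm_fderiv_le
      (fun x _ ↦ hH.differentiable one_ne_zero x) (fun x _ ↦ hK x)
      (Set.mem_univ 0) (Set.mem_univ p.1)
    rw [sub_zero] at hlip
    nlinarith [norm_sub_norm_le (H p.1) (H 0), mul_le_mul_of_nonneg_left (norm_fst_le p) hK0,
      norm_nonneg (H 0), sq_nonneg ‖p‖, sq_nonneg (1 - ‖p‖),
      mul_nonneg (norm_nonneg (H 0)) (sq_nonneg ‖p‖),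
      mul_nonneg hK0 (sq_nonneg (1 - ‖p‖)), mul_nonneg hK0 (norm_nonneg p)]
  have h := hasDerivAt_integral_comp_rotation (ρ := ρ) (K := ‖H 0‖ + K)
    (f := fun p ↦ H p.1) (by fun_prop) hgrowth (fun p ↦ ?_) θ
  · simpa [(hfderiv _).fderiv] using h
  · rw [(hfderiv p).fderiv]
    calc _ ≤ K * 1 := (ContinuousLinearMap.opNorm_comp_le _ _).trans
          (mul_le_mul (hK _) (ContinuousLinearMap.norm_fst_le ℝ F F) (norm_nonneg _) hK0)
      _ ≤ (‖H 0‖ + K) * (1 + ‖p‖) := by gcongr <;> simp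

theorem integral_le_integral_of_integral_fderiv_le {μ₀ μ₁ : Measure F} [IsGaussian μ₀]
    [IsGaussian μ₁] (hμ₀ : μ₀[id] = 0) (hμ₁ : μ₁[id] = 0) {H : F → ℝ} (hH : ContDiff ℝ 2 H)
    {K : ℝ} (hK : ∀ x, ‖fderiv ℝ H x‖ ≤ K) (hK' : ∀ x, ‖fderiv ℝ (fderiv ℝ H) x‖ ≤ K)
    (hle : ∀ x, ∫ u, fderiv ℝ (fderiv ℝ H) x u u ∂μ₁ ≤ ∫ u, fderiv ℝ (fderiv ℝ H) x u u ∂μ₀) :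
    ∫ x, H x ∂μ₁ ≤ ∫ x, H x ∂μ₀ := by
  let φ : ℝ → ℝ := fun θ ↦ ∫ p, H (rotation θ p).1 ∂(μ₀.prod μ₁)
  have hderiv (θ : ℝ) : HasDerivAt φ (∫ p, fderiv ℝ H (rotation θ p).1 (rotation θ p).2
      ∂(μ₀.prod μ₁)) θ := hasDerivAt_integral_comp_rotation_fst (hH.of_le one_le_two) hK θ
  have hanti : AntitoneOn φ (Set.Icc 0 (Real.pi / 2)) := by
    refine antitoneOn_of_deriv_nonpos (convex_Icc _ _)
      (fun θ _ ↦ (hderiv θ).continuousAt.continuousWithinAt)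
      (fun θ _ ↦ (hderiv θ).differentiableAt.differentiableWithinAt) fun θ hθ ↦ ?_
    rw [interior_Icc] at hθ
    rw [(hderiv θ).deriv, integral_fderiv_rotation hμ₀ hμ₁ hH hK hK']
    have hcos := Real.cos_nonneg_of_mem_Icc ⟨by linarith [hθ.1, Real.pi_pos], hθ.2.le⟩
    have hsin := Real.sin_nonneg_of_mem_Icc ⟨hθ.1.le, by linarith [hθ.2, Real.pi_pos]⟩
    exact mul_nonpos_of_nonneg_of_nonpos (mul_nonneg hsin hcos)
      (integral_nonpos fun p ↦ sub_nonpos.mpr (hle _))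
  have h := hanti (Set.left_mem_Icc.mpr (by positivity)) (Set.right_mem_Icc.mpr (by positivity))
    (by positivity)
  simpa [φ, ContinuousLinearMap.rotation_apply, integral_fun_fst, integral_fun_snd] using h

end Comparison

section SoftMin

variable {W : Type*} [Fintype W]

/-- The log-sum-exp smoothing of `⨅ w, z w` at inverse temperature `β`; it differs from the minimum
by at most `log |W| / β`. -/
noncomputable def softMin (β : ℝ) (z : W → ℝ) : ℝ :=
  -β⁻¹ * Real.log (∑ w, Real.exp (-β * z w))

/-- The Gibbs weights `e^{-β z w} / ∑ e^{-β z v}`, which form the gradient of `softMin β` at `z`. -/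
noncomputable def gibbsWeight (β : ℝ) (z : W → ℝ) (w : W) : ℝ :=
  Real.exp (-β * z w) / ∑ v, Real.exp (-β * z v)

theorem gibbsWeight_nonneg (β : ℝ) (z : W → ℝ) (w : W) : 0 ≤ gibbsWeight β z w := by
  unfold gibbsWeight; positivity

variable [Nonempty W]

theorem sum_exp_pos (β : ℝ) (z : W → ℝ) : 0 < ∑ w, Real.exp (-β * z w) :=
  Finset.sum_pos (fun _ _ ↦ Real.exp_pos _) Finset.univ_nonempty

theorem sum_gibbsWeight (β : ℝ) (z : W → ℝ) : ∑ w, gibbsWeight β z w = 1 := by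
  simp only [gibbsWeight, ← Finset.sum_div, div_self (sum_exp_pos β z).ne']

theorem softMin_le_iInf {β : ℝ} (hβ : 0 < β) (z : W → ℝ) : softMin β z ≤ ⨅ w, z w := by
  refine le_ciInf fun w ↦ ?_
  have h : -β * z w ≤ Real.log (∑ v, Real.exp (-β * z v)) :=
    (Real.le_log_iff_exp_le (sum_exp_pos β z)).mpr
      (Finset.single_le_sum (fun v _ ↦ (Real.exp_pos (-β * z v)).le) (Finset.mem_univ w))
  rw [softMin, neg_mul, neg_le, ← div_eq_inv_mul, le_div_iff₀ hβ]
  linarith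

theorem iInf_sub_le_softMin {β : ℝ} (hβ : 0 < β) (z : W → ℝ) :
    (⨅ w, z w) - Real.log (Fintype.card W) / β ≤ softMin β z := by
  have hcard : (0 : ℝ) < Fintype.card W := by exact_mod_cast Fintype.card_pos
  have h : ∑ w, Real.exp (-β * z w) ≤ Fintype.card W * Real.exp (-β * ⨅ w, z w) := by
    rw [← nsmul_eq_mul]
    refine Finset.sum_le_card_nsmul _ _ _ fun w _ ↦ Real.exp_le_exp.mpr ?_
    exact mul_le_mul_of_nonpos_left (ciInf_le (Finite.bddBelow_range z) w) (by linarith)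
  have hlog := Real.log_le_log (sum_exp_pos β z) h
  rw [Real.log_mul hcard.ne' (Real.exp_ne_zero _), Real.log_exp] at hlog
  rw [softMin, neg_mul, le_neg, ← div_eq_inv_mul, div_le_iff₀ hβ, neg_sub, sub_mul,
    div_mul_cancel₀ _ hβ.ne']
  linarith

theorem gibbsWeight_eq_exp {β : ℝ} (hβ : β ≠ 0) (z : W → ℝ) (w : W) :
    gibbsWeight β z w = Real.exp (-β * (z w - softMin β z)) := by
  have h : -β * (z w - softMin β z) = -β * z w - Real.log (∑ v, Real.exp (-β * z v)) := by
    rw [softMin]; field_simp; ring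
  rw [h, Real.exp_sub, Real.exp_log (sum_exp_pos β z), gibbsWeight]

theorem norm_sum_gibbsWeight_smul_le {E : Type*} [SeminormedAddCommGroup E] [NormedSpace ℝ E]
    (β : ℝ) (z : W → ℝ) {x : W → E} {L : ℝ} (hx : ∀ w, ‖x w‖ ≤ L) :
    ‖∑ w, gibbsWeight β z w • x w‖ ≤ L := by
  calc ‖∑ w, gibbsWeight β z w • x w‖ ≤ ∑ w, gibbsWeight β z w * L :=
        norm_sum_le_of_le _ fun w _ ↦ by
          rw [norm_smul, Real.norm_of_nonneg (gibbsWeight_nonneg β z w)]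
          exact mul_le_mul_of_nonneg_left (hx w) (gibbsWeight_nonneg β z w)
    _ = L := by rw [← Finset.sum_mul, sum_gibbsWeight, one_mul]

variable {F : Type*} [NormedAddCommGroup F] [NormedSpace ℝ F] {β : ℝ}
  {φ : W → F → ℝ} {φ' : W → F → StrongDual ℝ F} {φ'' : W → F →L[ℝ] StrongDual ℝ F} {y : F}

theorem hasFDerivAt_softMin_comp (hβ : β ≠ 0) (hφ : ∀ w, HasFDerivAt (φ w) (φ' w y) y) :
    HasFDerivAt (fun y ↦ softMin β (φ · y))
      (∑ w, gibbsWeight β (φ · y) w • φ' w y) y := by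
  have hexp (w : W) := ((hφ w).const_mul (-β)).exp
  have h := ((HasFDerivAt.fun_sum fun w (_ : w ∈ Finset.univ) ↦ hexp w).log
    (sum_exp_pos β (φ · y)).ne').const_mul (-β⁻¹)
  refine h.congr_fderiv ?_
  simp only [Finset.smul_sum, smul_smul, gibbsWeight]
  congr! 2
  field_simp

theorem hasFDerivAt_gibbsWeight_comp (hβ : β ≠ 0) (hφ : ∀ w, HasFDerivAt (φ w) (φ' w y) y)
    (w : W) :
    HasFDerivAt (fun y ↦ gibbsWeight β (φ · y) w) (-(β * gibbsWeight β (φ · y) w) •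
      (φ' w y - ∑ v, gibbsWeight β (φ · y) v • φ' v y)) y := by
  simp_rw [gibbsWeight_eq_exp hβ _ w]
  refine (((hφ w).fun_sub (hasFDerivAt_softMin_comp hβ hφ)).const_mul (-β)).exp.congr_fderiv ?_
  rw [smul_smul, mul_comm, neg_mul]

theorem hasFDerivAt_sum_gibbsWeight_smul (hβ : β ≠ 0)
    (hφ : ∀ w, HasFDerivAt (φ w) (φ' w y) y) (hφ' : ∀ w, HasFDerivAt (φ' w) (φ'' w) y) :
    HasFDerivAt (fun y ↦ ∑ w, gibbsWeight β (φ · y) w • φ' w y)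
      (∑ w, (gibbsWeight β (φ · y) w • φ'' w +
        (-(β * gibbsWeight β (φ · y) w) •
          (φ' w y - ∑ v, gibbsWeight β (φ · y) v • φ' v y)).smulRight (φ' w y))) y :=
  .fun_sum fun w _ ↦ (hasFDerivAt_gibbsWeight_comp hβ hφ w).smul (hφ' w)

theorem fderiv_fderiv_softMin_comp (hβ : β ≠ 0) (hφ : ∀ w y, HasFDerivAt (φ w) (φ' w y) y)
    (hφ' : ∀ w, HasFDerivAt (φ' w) (φ'' w) y) :
    fderiv ℝ (fderiv ℝ fun y ↦ softMin β (φ · y)) y = ∑ w, gibbsWeight β (φ · y) w •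
      (φ'' w - β • (φ' w y - ∑ v, gibbsWeight β (φ · y) v • φ' v y).smulRight (φ' w y)) := by
  have h₁ : (fderiv ℝ fun y ↦ softMin β (φ · y)) = fun y ↦ ∑ w, gibbsWeight β (φ · y) w • φ' w y :=
    funext fun y ↦ (hasFDerivAt_softMin_comp hβ fun w ↦ hφ w y).fderiv
  rw [h₁, (hasFDerivAt_sum_gibbsWeight_smul hβ (hφ · y) hφ').fderiv]
  congr! 1 with w
  ext u v
  simp only [add_apply, smul_apply, ContinuousLinearMap.smulRight_apply, sub_apply, sum_apply,
    smul_eq_mul, neg_mul, neg_smul, neg_apply]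
  ring

theorem fderiv_fderiv_softMin_comp_apply_self (hβ : β ≠ 0)
    (hφ : ∀ w y, HasFDerivAt (φ w) (φ' w y) y) (hφ' : ∀ w, HasFDerivAt (φ' w) (φ'' w) y) (u : F) :
    fderiv ℝ (fderiv ℝ fun y ↦ softMin β (φ · y)) y u u =
      ∑ w, gibbsWeight β (φ · y) w * (φ'' w u u - β * φ' w y u ^ 2) +
        β * (∑ w, gibbsWeight β (φ · y) w * φ' w y u) ^ 2 := by
  rw [fderiv_fderiv_softMin_comp hβ hφ hφ', sq (∑ w, _), Finset.sum_mul, Finset.mul_sum,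
    ← Finset.sum_add_distrib]
  simp only [sum_apply, smul_apply, sub_apply, ContinuousLinearMap.smulRight_apply, smul_eq_mul]
  congr! 1 with w
  ring

theorem norm_fderiv_fderiv_softMin_comp_le (hβ : 0 < β)
    (hφ : ∀ w y, HasFDerivAt (φ w) (φ' w y) y) (hφ' : ∀ w, HasFDerivAt (φ' w) (φ'' w) y)
    {L K : ℝ} (hL : ∀ w, ‖φ' w y‖ ≤ L) (hK : ∀ w, ‖φ'' w‖ ≤ K) :
    ‖fderiv ℝ (fderiv ℝ fun y ↦ softMin β (φ · y)) y‖ ≤ K + β * ((L + L) * L) := by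
  rw [fderiv_fderiv_softMin_comp hβ.ne' hφ hφ']
  have hL0 : 0 ≤ L := (norm_nonneg _).trans (hL (Classical.arbitrary W))
  have hterm (w : W) : ‖φ'' w - β • (φ' w y - ∑ v, gibbsWeight β (φ · y) v • φ' v y).smulRight
      (φ' w y)‖ ≤ K + β * ((L + L) * L) := by
    have hsub := norm_sub_le_of_le (hL w) (norm_sum_gibbsWeight_smul_le β (φ · y) hL)
    refine (norm_sub_le (E := F →L[ℝ] StrongDual ℝ F) _ _).trans (add_le_add (hK w) ?_)
    refine (ContinuousLinearMap.opNorm_smul_le _ _).trans ?_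
    rw [ContinuousLinearMap.norm_smulRight_apply, Real.norm_of_nonneg hβ.le]
    exact mul_le_mul_of_nonneg_left
      (mul_le_mul hsub (hL w) (norm_nonneg _) (add_nonneg hL0 hL0)) hβ.le
  exact norm_sum_gibbsWeight_smul_le (E := F →L[ℝ] StrongDual ℝ F) β _ hterm

end SoftMin

section SmoothNorm

open scoped InnerProductSpace

variable {V : Type*} [NormedAddCommGroup V]

/-- The smooth approximation `√(‖x‖² + δ²)` of the norm, within `δ` of it. -/
noncomputable def smoothNorm (δ : ℝ) (x : V) : ℝ := √(‖x‖ ^ 2 + δ ^ 2)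

variable {δ : ℝ}

theorem norm_le_smoothNorm (δ : ℝ) (x : V) : ‖x‖ ≤ smoothNorm δ x :=
  Real.le_sqrt_of_sq_le (by linarith [sq_nonneg δ])

theorem le_smoothNorm (δ : ℝ) (x : V) : δ ≤ smoothNorm δ x :=
  Real.le_sqrt_of_sq_le (by linarith [sq_nonneg ‖x‖])

theorem smoothNorm_le (hδ : 0 ≤ δ) (x : V) : smoothNorm δ x ≤ ‖x‖ + δ :=
  (Real.sqrt_le_left (by positivity)).mpr (by nlinarith [mul_nonneg hδ (norm_nonneg x)])

theorem smoothNorm_pos (hδ : 0 < δ) (x : V) : 0 < smoothNorm δ x := hδ.trans_le (le_smoothNorm δ x)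

variable [InnerProductSpace ℝ V]

/-- The gradient of `smoothNorm δ` at `x`, a vector of norm at most `1`. -/
noncomputable def smoothNormGrad (δ : ℝ) (x : V) : V := (smoothNorm δ x)⁻¹ • x

theorem norm_smoothNormGrad_le (δ : ℝ) (x : V) : ‖smoothNormGrad δ x‖ ≤ 1 := by
  have h := (norm_nonneg x).trans (norm_le_smoothNorm δ x)
  rw [smoothNormGrad, norm_smul, norm_inv, Real.norm_of_nonneg h]
  exact inv_mul_le_one_of_le₀ (norm_le_smoothNorm δ x) h

theorem hasFDerivAt_smoothNorm (hδ : 0 < δ) (x : V) :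
    HasFDerivAt (smoothNorm δ) (innerSL ℝ (smoothNormGrad δ x)) x := by
  have h : HasFDerivAt (smoothNorm δ) _ x :=
    ((hasFDerivAt_id x).norm_sq.add_const (δ ^ 2)).sqrt (by positivity)
  refine h.congr_fderiv ?_
  ext u
  simp only [id_eq, one_div, mul_inv_rev, ContinuousLinearMap.comp_id, smul_apply,
    coe_innerSL_apply, nsmul_eq_mul, Nat.cast_ofNat, smul_eq_mul, smoothNormGrad, smoothNorm,
    map_smul]
  ring

theorem hasFDerivAt_smoothNormGrad (hδ : 0 < δ) (x : V) :
    HasFDerivAt (smoothNormGrad δ) ((smoothNorm δ x)⁻¹ •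
      (.id ℝ V - (innerSL ℝ (smoothNormGrad δ x)).smulRight (smoothNormGrad δ x))) x := by
  have hpos := (smoothNorm_pos hδ x).ne'
  have h : HasFDerivAt (smoothNormGrad δ) _ x :=
    ((hasDerivAt_inv hpos).comp_hasFDerivAt x (hasFDerivAt_smoothNorm hδ x)).smul (hasFDerivAt_id x)
  refine h.congr_fderiv ?_
  ext u
  simp only [Function.comp_apply, smoothNormGrad, map_smul, smul_smul, neg_mul, neg_smul,
    add_apply, smul_apply, ContinuousLinearMap.id_apply, ContinuousLinearMap.smulRight_apply,
    neg_apply, coe_innerSL_apply, smul_eq_mul, sub_eq_add_neg, smul_add, smul_neg, add_right_inj,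
    neg_inj]
  ring_nf

theorem contDiff_smoothNorm (hδ : 0 < δ) {n : WithTop ℕ∞} :
    ContDiff ℝ n (smoothNorm δ : V → ℝ) :=
  ((contDiff_norm_sq ℝ).add contDiff_const).sqrt fun x ↦ by positivity

end SmoothNorm

section SmoothObjective

open scoped InnerProductSpace

variable {V F : Type*} [NormedAddCommGroup V] [InnerProductSpace ℝ V] [NormedAddCommGroup F]
  [NormedSpace ℝ F] {δ : ℝ}

theorem hasFDerivAt_smoothNorm_comp_add (hδ : 0 < δ) (X : F →L[ℝ] V) (S : StrongDual ℝ F) (y : F) :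
    HasFDerivAt (fun y ↦ smoothNorm δ (X y) + S y)
      (innerSL ℝ (smoothNormGrad δ (X y)) ∘L X + S) y :=
  ((hasFDerivAt_smoothNorm hδ (X y)).comp y X.hasFDerivAt).add S.hasFDerivAt

/-- The second derivative at `y` of `y ↦ smoothNorm δ (X y)`. -/
noncomputable def smoothNormHess (δ : ℝ) (X : F →L[ℝ] V) (y : F) : F →L[ℝ] StrongDual ℝ F :=
  (ContinuousLinearMap.compL ℝ F V ℝ).flip X ∘L (innerSL ℝ : V →L[ℝ] V →L[ℝ] ℝ) ∘L
    ((smoothNorm δ (X y))⁻¹ • (.id ℝ V -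
      (innerSL ℝ (smoothNormGrad δ (X y))).smulRight (smoothNormGrad δ (X y)))) ∘L X

theorem smoothNormHess_apply (δ : ℝ) (X : F →L[ℝ] V) (y u v : F) :
    smoothNormHess δ X y u v = (smoothNorm δ (X y))⁻¹ * (⟪X u, X v⟫_ℝ -
      ⟪smoothNormGrad δ (X y), X u⟫_ℝ * ⟪smoothNormGrad δ (X y), X v⟫_ℝ) := by
  change ⟪(smoothNorm δ (X y))⁻¹ • (X u - ⟪smoothNormGrad δ (X y), X u⟫_ℝ •
    smoothNormGrad δ (X y)), X v⟫_ℝ = _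
  rw [real_inner_smul_left, inner_sub_left, real_inner_smul_left]

theorem hasFDerivAt_innerSL_smoothNormGrad_comp (hδ : 0 < δ) (X : F →L[ℝ] V) (S : StrongDual ℝ F)
    (y : F) :
    HasFDerivAt (fun y ↦ innerSL ℝ (smoothNormGrad δ (X y)) ∘L X + S) (smoothNormHess δ X y) y := by
  have h := (hasFDerivAt_smoothNormGrad hδ (X y)).comp y X.hasFDerivAt
  have h' := (innerSL ℝ : V →L[ℝ] V →L[ℝ] ℝ).hasFDerivAt.comp y h
  exact (((ContinuousLinearMap.compL ℝ F V ℝ).flip X).hasFDerivAt.comp y h').add_const S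

theorem norm_innerSL_smoothNormGrad_comp_le (δ : ℝ) (X : F →L[ℝ] V) (S : StrongDual ℝ F) (y : F) :
    ‖innerSL ℝ (smoothNormGrad δ (X y)) ∘L X + S‖ ≤ ‖X‖ + ‖S‖ := by
  refine norm_add_le_of_le ((ContinuousLinearMap.opNorm_comp_le _ _).trans ?_) le_rfl
  rw [innerSL_apply_norm]
  exact mul_le_of_le_one_left (norm_nonneg X) (norm_smoothNormGrad_le δ _)

theorem norm_smoothNormHess_le (hδ : 0 < δ) (X : F →L[ℝ] V) (y : F) :
    ‖smoothNormHess δ X y‖ ≤ δ⁻¹ * (2 * ‖X‖ ^ 2) := by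
  refine ContinuousLinearMap.opNorm_le_bound₂ _ (by positivity) fun u v ↦ ?_
  set q := smoothNormGrad δ (X y)
  have hq (u : F) : |⟪q, X u⟫_ℝ| ≤ ‖X‖ * ‖u‖ :=
    (abs_real_inner_le_norm _ _).trans <| (mul_le_of_le_one_left (norm_nonneg _)
      (norm_smoothNormGrad_le δ _)).trans (X.le_opNorm u)
  have hX : |⟪X u, X v⟫_ℝ| ≤ (‖X‖ * ‖u‖) * (‖X‖ * ‖v‖) :=
    (abs_real_inner_le_norm _ _).trans (by gcongr <;> exact X.le_opNorm _)
  have hqq : |⟪q, X u⟫_ℝ * ⟪q, X v⟫_ℝ| ≤ (‖X‖ * ‖u‖) * (‖X‖ * ‖v‖) := by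
    rw [abs_mul]; gcongr <;> exact hq _
  rw [smoothNormHess_apply, norm_mul, Real.norm_eq_abs, Real.norm_eq_abs,
    abs_of_pos (inv_pos.mpr (smoothNorm_pos hδ _))]
  calc (smoothNorm δ (X y))⁻¹ * |⟪X u, X v⟫_ℝ - ⟪q, X u⟫_ℝ * ⟪q, X v⟫_ℝ|
      ≤ δ⁻¹ * ((‖X‖ * ‖u‖) * (‖X‖ * ‖v‖) + (‖X‖ * ‖u‖) * (‖X‖ * ‖v‖)) := by
        gcongr
        · exact le_smoothNorm δ _
        · exact (abs_sub _ _).trans (add_le_add hX hqq)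
    _ = δ⁻¹ * (2 * ‖X‖ ^ 2) * ‖u‖ * ‖v‖ := by ring

theorem exists_lipschitzWith_iInf_norm_add {W : Type*} [Finite W] [Nonempty W]
    (X : W → F →L[ℝ] V) (S : W → StrongDual ℝ F) :
    ∃ K, LipschitzWith K fun y ↦ ⨅ w, (‖X w y‖ + S w y) := by
  obtain ⟨K, hK⟩ := Finite.exists_le fun w ↦ ‖X w‖₊ + ‖S w‖₊
  refine ⟨K, lipschitzWith_iInf (fun w ↦ ?_) fun y ↦ Finite.bddBelow_range _⟩
  have h := (lipschitzWith_one_norm.comp (X w).lipschitz).add (S w).lipschitz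
  rw [one_mul] at h
  exact h.weaken (hK w)

variable {W : Type*} [Fintype W] [Nonempty W] {X : W → F →L[ℝ] V} {S : W → StrongDual ℝ F} {β : ℝ}

/-- The smooth surrogate, as a function of `y`, of the objective `⨅ w, (‖X w y‖ + S w y)`. -/
noncomputable def smoothMin (δ β : ℝ) (X : W → F →L[ℝ] V) (S : W → StrongDual ℝ F) (y : F) : ℝ :=
  softMin β fun w ↦ smoothNorm δ (X w y) + S w y

theorem contDiff_smoothMin (hδ : 0 < δ) : ContDiff ℝ 2 (smoothMin δ β X S) := by
  have h (w : W) : ContDiff ℝ 2 fun y ↦ smoothNorm δ (X w y) + S w y :=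
    ((contDiff_smoothNorm hδ).comp (X w).contDiff).add (S w).contDiff
  exact contDiff_const.mul ((ContDiff.sum fun w _ ↦ (contDiff_const.mul (h w)).exp).log
    fun y ↦ (sum_exp_pos β _).ne')

theorem exists_norm_fderiv_smoothMin_le (hδ : 0 < δ) (hβ : 0 < β) :
    ∃ K, ∀ y, ‖fderiv ℝ (smoothMin δ β X S) y‖ ≤ K ∧
      ‖fderiv ℝ (fderiv ℝ (smoothMin δ β X S)) y‖ ≤ K := by
  obtain ⟨L, hL⟩ := Finite.exists_le fun w ↦ ‖X w‖ + ‖S w‖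
  obtain ⟨M, hM⟩ := Finite.exists_le fun w ↦ δ⁻¹ * (2 * ‖X w‖ ^ 2)
  have hφ (w y) := hasFDerivAt_smoothNorm_comp_add hδ (X w) (S w) y
  have hφ' (y w) := hasFDerivAt_innerSL_smoothNormGrad_comp hδ (X w) (S w) y
  have hL' (y w) := (norm_innerSL_smoothNormGrad_comp_le δ (X w) (S w) y).trans (hL w)
  refine ⟨max L (M + β * ((L + L) * L)), fun y ↦ ⟨le_max_of_le_left ?_, le_max_of_le_right ?_⟩⟩
  · have h : HasFDerivAt (smoothMin δ β X S) _ y := hasFDerivAt_softMin_comp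
      (φ' := fun w y ↦ innerSL ℝ (smoothNormGrad δ (X w y)) ∘L X w + S w) hβ.ne' (hφ · y)
    exact h.fderiv ▸ norm_sum_gibbsWeight_smul_le β _ (hL' y)
  · exact norm_fderiv_fderiv_softMin_comp_le hβ hφ (hφ' y) (hL' y)
      fun w ↦ (norm_smoothNormHess_le hδ (X w) y).trans (hM w)

theorem fderiv_fderiv_smoothMin_apply_self (hδ : 0 < δ) (hβ : 0 < β) (y u : F) :
    let p := gibbsWeight β fun w ↦ smoothNorm δ (X w y) + S w y
    let q (w : W) := smoothNormGrad δ (X w y)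
    fderiv ℝ (fderiv ℝ (smoothMin δ β X S)) y u u =
      ∑ w, p w * ((smoothNorm δ (X w y))⁻¹ * (‖X w u‖ ^ 2 - ⟪q w, X w u⟫_ℝ ^ 2) -
        β * (⟪q w, X w u⟫_ℝ + S w u) ^ 2) +
      β * (∑ w, p w * (⟪q w, X w u⟫_ℝ + S w u)) ^ 2 := by
  refine (fderiv_fderiv_softMin_comp_apply_self hβ.ne'
    (fun w ↦ hasFDerivAt_smoothNorm_comp_add hδ (X w) (S w))
    (fun w ↦ hasFDerivAt_innerSL_smoothNormGrad_comp hδ (X w) (S w) y) u).trans ?_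
  simp only [smoothNormHess_apply, real_inner_self_eq_norm_sq, ← sq]
  rfl

theorem smoothMin_le_iInf (hδ : 0 ≤ δ) (hβ : 0 < β) (y : F) :
    smoothMin δ β X S y ≤ (⨅ w, (‖X w y‖ + S w y)) + δ := by
  refine (softMin_le_iInf hβ _).trans ?_
  rw [← sub_le_iff_le_add]
  refine le_ciInf fun w ↦ sub_le_iff_le_add.mpr ((ciInf_le (Finite.bddBelow_range _) w).trans ?_)
  linarith [smoothNorm_le hδ (X w y)]

theorem iInf_le_smoothMin (hβ : 0 < β) (y : F) :
    (⨅ w, (‖X w y‖ + S w y)) - Real.log (Fintype.card W) / β ≤ smoothMin δ β X S y := by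
  refine le_trans (sub_le_sub_right (ciInf_mono (Finite.bddBelow_range _) fun w ↦ ?_) _)
    (iInf_sub_le_softMin hβ _)
  exact add_le_add_left (norm_le_smoothNorm δ _) _

theorem exists_lipschitzWith_smoothMin (hδ : 0 < δ) (hβ : 0 < β) :
    ∃ K, LipschitzWith K (smoothMin δ β X S) := by
  obtain ⟨K, hK⟩ := exists_norm_fderiv_smoothMin_le (X := X) (S := S) hδ hβ
  exact ⟨K.toNNReal, lipschitzWith_of_nnnorm_fderiv_le
    ((contDiff_smoothMin hδ).differentiable two_ne_zero) fun y ↦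
      NNReal.coe_le_coe.mp ((hK y).1.trans (Real.le_coe_toNNReal K))⟩

end SmoothObjective

section GaussianComparison

open scoped InnerProductSpace

variable {V F W : Type*} [NormedAddCommGroup V] [InnerProductSpace ℝ V] [NormedAddCommGroup F]
  [NormedSpace ℝ F] [MeasurableSpace F] [BorelSpace F] [Fintype W] {μ : Measure F} [IsGaussian μ]

theorem integrable_dual_mul_dual (L M : StrongDual ℝ F) : Integrable (fun u ↦ L u * M u) μ :=
  (IsGaussian.memLp_dual μ L 2 (by simp)).integrable_mul (IsGaussian.memLp_dual μ M 2 (by simp))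

theorem integrable_dual_sq (L : StrongDual ℝ F) : Integrable (fun u ↦ L u ^ 2) μ :=
  (IsGaussian.memLp_dual μ L 2 (by simp)).integrable_sq

theorem integral_sum_mul_dual_sq (p : W → ℝ)
    (L : W → StrongDual ℝ F) :
    ∫ u, (∑ w, p w * L w u) ^ 2 ∂μ = ∑ w, ∑ v, p w * p v * ∫ u, L w u * L v u ∂μ := by
  have h (u : F) : (∑ w, p w * L w u) ^ 2 = ∑ w, ∑ v, p w * p v * (L w u * L v u) := by
    rw [sq, Finset.sum_mul_sum]
    congr! 2
    ring
  have hint (w v : W) : Integrable (fun u ↦ p w * p v * (L w u * L v u)) μ :=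
    (integrable_dual_mul_dual (L w) (L v)).const_mul _
  simp_rw [h]
  rw [integral_finsetSum _ fun w _ ↦ integrable_finsetSum _ fun v _ ↦ hint w v]
  congr! 1 with w
  rw [integral_finsetSum _ fun v _ ↦ hint w v]
  simp only [integral_const_mul]

theorem integral_norm_sq_eq_sum [FiniteDimensional ℝ V] (X : F →L[ℝ] V) :
    ∫ u, ‖X u‖ ^ 2 ∂μ = ∑ i, ∫ u, ⟪stdOrthonormalBasis ℝ V i, X u⟫_ℝ ^ 2 ∂μ := by
  simp_rw [← (stdOrthonormalBasis ℝ V).sum_sq_inner_right (X _)]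
  exact integral_finsetSum _ fun i _ ↦
    integrable_dual_sq (innerSL ℝ (stdOrthonormalBasis ℝ V i) ∘L X)

variable [CompleteSpace F] [SecondCountableTopology F]

theorem integrable_norm_sq (X : F →L[ℝ] V) : Integrable (fun u ↦ ‖X u‖ ^ 2) μ :=
  (X.comp_memLp' (IsGaussian.memLp_two_id (μ := μ))).norm.integrable_sq

variable {X : W → F →L[ℝ] V} {S : W → StrongDual ℝ F}

theorem integral_gibbs_quadratic (p r : W → ℝ) (q : W → V) (β : ℝ) :
    ∫ u, (∑ w, p w * (r w * (‖X w u‖ ^ 2 - ⟪q w, X w u⟫_ℝ ^ 2) -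
        β * (⟪q w, X w u⟫_ℝ + S w u) ^ 2) +
      β * (∑ w, p w * (⟪q w, X w u⟫_ℝ + S w u)) ^ 2) ∂μ =
    ∑ w, p w * (r w * (∫ u, ‖X w u‖ ^ 2 ∂μ - ∫ u, ⟪q w, X w u⟫_ℝ ^ 2 ∂μ) -
        β * ∫ u, (⟪q w, X w u⟫_ℝ + S w u) ^ 2 ∂μ) +
      β * ∑ w, ∑ v, p w * p v *
        ∫ u, (⟪q w, X w u⟫_ℝ + S w u) * (⟪q v, X v u⟫_ℝ + S v u) ∂μ := by
  let L (w : W) : StrongDual ℝ F := innerSL ℝ (q w) ∘L X w + S w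
  have hX (w : W) : Integrable (fun u ↦ ‖X w u‖ ^ 2) μ := integrable_norm_sq (X w)
  have hq (w : W) : Integrable (fun u ↦ ⟪q w, X w u⟫_ℝ ^ 2) μ :=
    integrable_dual_sq (innerSL ℝ (q w) ∘L X w)
  have hL (w : W) : Integrable (fun u ↦ (⟪q w, X w u⟫_ℝ + S w u) ^ 2) μ := integrable_dual_sq (L w)
  have hsub (w : W) : Integrable (fun u ↦ r w * (‖X w u‖ ^ 2 - ⟪q w, X w u⟫_ℝ ^ 2)) μ :=
    ((hX w).sub (hq w)).const_mul _
  have hterm (w : W) : Integrable (fun u ↦ p w * (r w * (‖X w u‖ ^ 2 - ⟪q w, X w u⟫_ℝ ^ 2) -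
      β * (⟪q w, X w u⟫_ℝ + S w u) ^ 2)) μ :=
    ((hsub w).sub ((hL w).const_mul _)).const_mul _
  have hsq : Integrable (fun u ↦ (∑ w, p w * (⟪q w, X w u⟫_ℝ + S w u)) ^ 2) μ := by
    simpa [L, mul_add] using integrable_dual_sq (μ := μ) (∑ w, p w • L w)
  rw [integral_add (integrable_finsetSum _ fun w _ ↦ hterm w) (hsq.const_mul β),
    integral_finsetSum _ fun w _ ↦ hterm w, integral_const_mul]
  congr 2
  · congr! 1 with w
    rw [integral_const_mul, integral_sub (hsub w) ((hL w).const_mul _),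
      integral_const_mul, integral_const_mul, integral_sub (hX w) (hq w)]
  · exact integral_sum_mul_dual_sq p L

variable {μ₀ μ₁ : Measure F}

/-- The covariance hypotheses of Gordon's comparison lemma for the process `y ↦ (X w y, S w y)`
under `μ₁` and `μ₀`: each single index has the same second moments under both measures, and the
mixed moments under `μ₁` are at most those under `μ₀`. All moments are taken after pairing the
vector component with vectors of the unit ball, which linearizes the norm. -/
structure GordonDominated (μ₁ μ₀ : Measure F) (X : W → F →L[ℝ] V) (S : W → StrongDual ℝ F) :
    Prop where
  integral_inner_sq (w : W) (a : V) : ∫ u, ⟪a, X w u⟫_ℝ ^ 2 ∂μ₁ = ∫ u, ⟪a, X w u⟫_ℝ ^ 2 ∂μ₀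
  integral_sq (w : W) (a : V) :
    ∫ u, (⟪a, X w u⟫_ℝ + S w u) ^ 2 ∂μ₁ = ∫ u, (⟪a, X w u⟫_ℝ + S w u) ^ 2 ∂μ₀
  integral_mul_le (w v : W) {a b : V} (ha : ‖a‖ ≤ 1) (hb : ‖b‖ ≤ 1) :
    ∫ u, (⟪a, X w u⟫_ℝ + S w u) * (⟪b, X v u⟫_ℝ + S v u) ∂μ₁ ≤
      ∫ u, (⟪a, X w u⟫_ℝ + S w u) * (⟪b, X v u⟫_ℝ + S v u) ∂μ₀

namespace GordonDominated

variable [IsGaussian μ₀] [IsGaussian μ₁] [FiniteDimensional ℝ V] [Nonempty W] {δ β : ℝ}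

theorem integral_fderiv_fderiv_smoothMin_le (h : GordonDominated μ₁ μ₀ X S) (hδ : 0 < δ)
    (hβ : 0 < β) (y : F) :
    ∫ u, fderiv ℝ (fderiv ℝ (smoothMin δ β X S)) y u u ∂μ₁ ≤
      ∫ u, fderiv ℝ (fderiv ℝ (smoothMin δ β X S)) y u u ∂μ₀ := by
  have hnorm (w : W) : ∫ u, ‖X w u‖ ^ 2 ∂μ₁ = ∫ u, ‖X w u‖ ^ 2 ∂μ₀ := by
    simp only [integral_norm_sq_eq_sum, h.integral_inner_sq]
  have hp (w : W) := gibbsWeight_nonneg β (fun w ↦ smoothNorm δ (X w y) + S w y) w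
  have hq (w : W) := norm_smoothNormGrad_le δ (X w y)
  simp only [fderiv_fderiv_smoothMin_apply_self hδ hβ, integral_gibbs_quadratic, hnorm,
    h.integral_inner_sq, h.integral_sq]
  refine add_le_add_right (mul_le_mul_of_nonneg_left ?_ hβ.le) _
  exact Finset.sum_le_sum fun w _ ↦ Finset.sum_le_sum fun v _ ↦
    mul_le_mul_of_nonneg_left (h.integral_mul_le w v (hq w) (hq v)) (mul_nonneg (hp w) (hp v))

theorem integral_smoothMin_le (h : GordonDominated μ₁ μ₀ X S) (hμ₀ : μ₀[id] = 0)
    (hμ₁ : μ₁[id] = 0) (hδ : 0 < δ) (hβ : 0 < β) :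
    ∫ y, smoothMin δ β X S y ∂μ₁ ≤ ∫ y, smoothMin δ β X S y ∂μ₀ := by
  obtain ⟨K, hK⟩ := exists_norm_fderiv_smoothMin_le (X := X) (S := S) hδ hβ
  exact integral_le_integral_of_integral_fderiv_le hμ₀ hμ₁ (contDiff_smoothMin hδ)
    (fun y ↦ (hK y).1) (fun y ↦ (hK y).2) (h.integral_fderiv_fderiv_smoothMin_le hδ hβ)

theorem integral_iInf_le {W : Type*} [Finite W] [Nonempty W] {X : W → F →L[ℝ] V}
    {S : W → StrongDual ℝ F} (h : GordonDominated μ₁ μ₀ X S) (hμ₀ : μ₀[id] = 0)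
    (hμ₁ : μ₁[id] = 0) :
    ∫ y, ⨅ w, (‖X w y‖ + S w y) ∂μ₁ ≤ ∫ y, ⨅ w, (‖X w y‖ + S w y) ∂μ₀ := by
  have := Fintype.ofFinite W
  set c := Real.log (Fintype.card W)
  have hc : 0 ≤ c := Real.log_natCast_nonneg _
  have hint (μ : Measure F) [IsGaussian μ] :
      Integrable (fun y ↦ ⨅ w, (‖X w y‖ + S w y)) μ := by
    obtain ⟨K, hK⟩ := exists_lipschitzWith_iInf_norm_add X S
    exact integrable_of_lipschitzWith hK
  refine le_of_forall_pos_le_add fun ε hε ↦ ?_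
  have hβ : 0 < 2 * (c + 1) / ε := by positivity
  have hδ : 0 < ε / 2 := by positivity
  obtain ⟨K, hK⟩ := exists_lipschitzWith_smoothMin (X := X) (S := S) hδ hβ
  have hcε : c / (2 * (c + 1) / ε) ≤ ε / 2 := by
    rw [div_div_eq_mul_div, div_le_div_iff₀ (by positivity) two_pos]
    nlinarith
  have h₁ := integral_mono ((hint μ₁).sub (integrable_const _)) (integrable_of_lipschitzWith hK)
    fun y ↦ iInf_le_smoothMin hβ y
  have h₀ := integral_mono (integrable_of_lipschitzWith hK) ((hint μ₀).add (integrable_const _))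
    fun y ↦ smoothMin_le_iInf hδ.le hβ y
  simp only [Pi.sub_apply, Pi.add_apply] at h₀ h₁
  rw [integral_sub (hint μ₁) (integrable_const _)] at h₁
  rw [integral_add (hint μ₀) (integrable_const _)] at h₀
  simp only [integral_const, probReal_univ, one_smul] at h₀ h₁
  linarith [h.integral_smoothMin_le hμ₀ hμ₁ hδ hβ]

end GordonDominated

end GaussianComparison

section GaussianOperator

open scoped InnerProductSpace

variable {ι E E' : Type*} [NormedAddCommGroup E] [InnerProductSpace ℝ E]
  [NormedAddCommGroup E'] [InnerProductSpace ℝ E']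

/-- The linear map `G ↦ G t`, where `G` is the matrix whose rows are the vectors `G i`. -/
noncomputable def rowsApply (t : E) : PiLp 2 (fun _ : ι ↦ E) →L[ℝ] EuclideanSpace ℝ ι :=
  (PiLp.continuousLinearEquiv 2 ℝ fun _ : ι ↦ ℝ).symm ∘L
    .pi fun i ↦ innerSL ℝ t ∘L PiLp.proj 2 (fun _ : ι ↦ E) i

@[simp]
theorem rowsApply_apply (t : E) (G : PiLp 2 (fun _ : ι ↦ E)) (i : ι) :
    rowsApply t G i = ⟪t, G i⟫_ℝ := rfl

theorem rowsApply_sub (s t : E) (G : PiLp 2 (fun _ : ι ↦ E)) :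
    rowsApply (s - t) G = rowsApply s G - rowsApply t G := by
  ext i
  simp [inner_sub_left]

variable [Fintype ι]

theorem norm_rowsApply_le (t : E) (G : PiLp 2 (fun _ : ι ↦ E)) :
    ‖rowsApply t G‖ ≤ ‖t‖ * ‖G‖ := by
  refine le_of_sq_le_sq ?_ (by positivity)
  rw [mul_pow, EuclideanSpace.norm_sq_eq, PiLp.norm_sq_eq_of_L2, Finset.mul_sum]
  gcongr with i
  rw [← mul_pow]
  gcongr
  exact abs_real_inner_le_norm t (G i)

/-- The rank-one matrix `a tᵀ`, given by its rows. -/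
def outerProduct (a : EuclideanSpace ℝ ι) (t : E) : PiLp 2 (fun _ : ι ↦ E) :=
  WithLp.toLp 2 fun i ↦ a i • t

theorem inner_rowsApply (a : EuclideanSpace ℝ ι) (t : E) (G : PiLp 2 (fun _ : ι ↦ E)) :
    ⟪a, rowsApply t G⟫_ℝ = ⟪outerProduct a t, G⟫_ℝ := by
  simp [PiLp.inner_apply, outerProduct, real_inner_smul_left, mul_comm]

theorem inner_outerProduct (a b : EuclideanSpace ℝ ι) (s t : E) :
    ⟪outerProduct a s, outerProduct b t⟫_ℝ = ⟪a, b⟫_ℝ * ⟪s, t⟫_ℝ := by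
  simp [PiLp.inner_apply, outerProduct, real_inner_smul_left, real_inner_smul_right,
    Finset.sum_mul, mul_assoc, mul_left_comm]

variable [FiniteDimensional ℝ E] [MeasurableSpace E] [BorelSpace E]
  [FiniteDimensional ℝ E'] [MeasurableSpace E'] [BorelSpace E']

theorem integral_inner_mul_inner_stdGaussian (a b : E) :
    ∫ x, ⟪a, x⟫_ℝ * ⟪b, x⟫_ℝ ∂stdGaussian E = ⟪a, b⟫_ℝ := by
  have h := covarianceBilin_apply_eq_cov (IsGaussian.memLp_two_id (μ := stdGaussian E)) a b
  rw [covarianceBilin_stdGaussian, innerSL_apply_apply] at h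
  have hLp (x : E) : MemLp (fun u ↦ ⟪x, u⟫_ℝ) 2 (stdGaussian E) :=
    IsGaussian.memLp_dual _ (innerSL ℝ x) 2 (by simp)
  have ha : ∫ x, ⟪a, x⟫_ℝ ∂stdGaussian E = 0 := integral_strongDual_stdGaussian (innerSL ℝ a)
  simpa [covariance_eq_sub (hLp a) (hLp b), ha] using h.symm

theorem map_toLp_prod_stdGaussian :
    ((stdGaussian E).prod (stdGaussian E')).map (WithLp.toLp 2) =
      stdGaussian (WithLp 2 (E × E')) := by
  have : IsProbabilityMeasure (((stdGaussian E).prod (stdGaussian E')).map (WithLp.toLp 2)) :=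
    Measure.isProbabilityMeasure_map (by fun_prop)
  refine Measure.ext_of_charFun (funext fun z ↦ ?_)
  rw [charFun_prod, charFun_stdGaussian, charFun_stdGaussian, charFun_stdGaussian,
    ← Complex.exp_add]
  norm_cast
  rw [WithLp.prod_norm_sq_eq_of_L2]
  congr 1
  change _ = -(‖z.ofLp.1‖ ^ 2 + ‖z.ofLp.2‖ ^ 2) / 2
  ring

theorem map_toLp_pi_stdGaussian :
    (Measure.pi fun _ : ι ↦ stdGaussian E).map (WithLp.toLp 2) =
      stdGaussian (PiLp 2 fun _ : ι ↦ E) := by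
  have : IsProbabilityMeasure ((Measure.pi fun _ : ι ↦ stdGaussian E).map (WithLp.toLp 2)) :=
    Measure.isProbabilityMeasure_map (by fun_prop)
  refine Measure.ext_of_charFun (funext fun z ↦ ?_)
  simp only [charFun_pi, charFun_stdGaussian, ← Complex.exp_sum]
  norm_cast
  rw [PiLp.norm_sq_eq_of_L2, ← Finset.sum_neg_distrib, Finset.sum_div]

theorem integral_inner_add_inner_mul (a b : E) (c d : E') :
    ∫ p, (⟪a, p.1⟫_ℝ + ⟪c, p.2⟫_ℝ) * (⟪b, p.1⟫_ℝ + ⟪d, p.2⟫_ℝ)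
      ∂(stdGaussian E).prod (stdGaussian E') = ⟪a, b⟫_ℝ + ⟪c, d⟫_ℝ := by
  have h := integral_inner_mul_inner_stdGaussian (WithLp.toLp 2 (a, c)) (WithLp.toLp 2 (b, d))
  rw [← map_toLp_prod_stdGaussian,
    integral_map (by fun_prop) (by fun_prop : Continuous _).aestronglyMeasurable] at h
  simpa using h

end GaussianOperator

section GordonFinite

open scoped InnerProductSpace

open ContinuousLinearMap (fst snd proj)

variable {ι E W : Type*} [Fintype ι] [NormedAddCommGroup E] [InnerProductSpace ℝ E]
  [FiniteDimensional ℝ E] [MeasurableSpace E] [BorelSpace E]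

/-- Gordon's process `(G (t w), ‖t w‖ η)`, evaluated at the sample `(G, η)`. The scalar `η`
equalizes the variances with those of `decoupledProcess`. -/
noncomputable def coupledProcess (t : W → E) :
    PiLp 2 (fun _ : ι ↦ E) × ℝ →L[ℝ] W → EuclideanSpace ℝ ι × ℝ :=
  .pi fun w ↦ (rowsApply (t w) ∘L fst ℝ _ ℝ).prod (‖t w‖ • snd ℝ _ ℝ)

/-- Gordon's comparison process `(‖t w‖ g, ⟪t w, h⟫)`, evaluated at the sample `(g, h)`. -/
noncomputable def decoupledProcess (t : W → E) :
    EuclideanSpace ℝ ι × E →L[ℝ] W → EuclideanSpace ℝ ι × ℝ :=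
  .pi fun w ↦ (‖t w‖ • fst ℝ _ E).prod (innerSL ℝ (t w) ∘L snd ℝ _ E)

theorem integral_coupledProcess (t : W → E) (w v : W) (a b : EuclideanSpace ℝ ι) (c d : ℝ) :
    ∫ p, (⟪a, (coupledProcess t p w).1⟫_ℝ + c * (coupledProcess t p w).2) *
        (⟪b, (coupledProcess t p v).1⟫_ℝ + d * (coupledProcess t p v).2)
      ∂(stdGaussian _).prod (stdGaussian ℝ) =
    ⟪a, b⟫_ℝ * ⟪t w, t v⟫_ℝ + c * d * (‖t w‖ * ‖t v‖) := by
  have h := integral_inner_add_inner_mul (outerProduct a (t w)) (outerProduct b (t v))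
    (c * ‖t w‖) (d * ‖t v‖)
  rw [inner_outerProduct] at h
  simp only [← inner_rowsApply] at h
  simpa [coupledProcess, mul_comm, mul_left_comm, mul_assoc] using h

theorem integral_decoupledProcess (t : W → E) (w v : W) (a b : EuclideanSpace ℝ ι) (c d : ℝ) :
    ∫ p, (⟪a, (decoupledProcess t p w).1⟫_ℝ + c * (decoupledProcess t p w).2) *
        (⟪b, (decoupledProcess t p v).1⟫_ℝ + d * (decoupledProcess t p v).2)
      ∂(stdGaussian _).prod (stdGaussian E) =
    ⟪a, b⟫_ℝ * (‖t w‖ * ‖t v‖) + c * d * ⟪t w, t v⟫_ℝ := by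
  have h := integral_inner_add_inner_mul (‖t w‖ • a) (‖t v‖ • b) (c • t w) (d • t v)
  simpa [decoupledProcess, real_inner_smul_left, real_inner_smul_right, mul_comm,
    mul_left_comm, mul_assoc] using h

theorem gordonDominated_processes [Fintype W] (t : W → E) :
    GordonDominated (((stdGaussian (EuclideanSpace ℝ ι)).prod (stdGaussian E)).map
        (decoupledProcess t))
      (((stdGaussian (PiLp 2 fun _ : ι ↦ E)).prod (stdGaussian ℝ)).map (coupledProcess t))
      (fun w ↦ fst ℝ _ ℝ ∘L proj w) (fun w ↦ snd ℝ _ ℝ ∘L proj w) where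
  integral_inner_sq w a := by
    rw [integral_map (by fun_prop) (by fun_prop : Continuous _).aestronglyMeasurable,
      integral_map (by fun_prop) (by fun_prop : Continuous _).aestronglyMeasurable]
    have h₁ := integral_decoupledProcess t w w a a 0 0
    have h₀ := integral_coupledProcess t w w a a 0 0
    rw [real_inner_self_eq_norm_mul_norm (t w)] at h₀ h₁
    simpa [sq] using h₁.trans h₀.symm
  integral_sq w a := by
    rw [integral_map (by fun_prop) (by fun_prop : Continuous _).aestronglyMeasurable,
      integral_map (by fun_prop) (by fun_prop : Continuous _).aestronglyMeasurable]
    have h₁ := integral_decoupledProcess t w w a a 1 1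
    have h₀ := integral_coupledProcess t w w a a 1 1
    rw [real_inner_self_eq_norm_mul_norm (t w)] at h₀ h₁
    simpa [sq] using h₁.trans h₀.symm
  integral_mul_le w v a b ha hb := by
    rw [integral_map (by fun_prop) (by fun_prop : Continuous _).aestronglyMeasurable,
      integral_map (by fun_prop) (by fun_prop : Continuous _).aestronglyMeasurable]
    have h₁ := integral_decoupledProcess t w v a b 1 1
    have h₀ := integral_coupledProcess t w v a b 1 1
    simp only [one_mul] at h₀ h₁
    have hab : ⟪a, b⟫_ℝ ≤ 1 := (real_inner_le_norm a b).trans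
      (mul_le_one₀ ha (norm_nonneg b) hb)
    refine h₁.trans_le (le_trans ?_ h₀.symm.le)
    nlinarith [mul_nonneg (sub_nonneg.mpr hab) (sub_nonneg.mpr (real_inner_le_norm (t w) (t v)))]

theorem integral_id_map_eq_zero {F F' : Type*} [NormedAddCommGroup F] [NormedSpace ℝ F]
    [MeasurableSpace F] [BorelSpace F] [CompleteSpace F] [SecondCountableTopology F]
    [NormedAddCommGroup F'] [NormedSpace ℝ F'] [MeasurableSpace F'] [BorelSpace F']
    [CompleteSpace F'] [SecondCountableTopology F'] {μ : Measure F} [IsGaussian μ]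
    (hμ : μ[id] = 0) (T : F →L[ℝ] F') : (μ.map T)[id] = 0 := by
  rw [integral_map (by fun_prop) aestronglyMeasurable_id]
  exact (T.integral_comp_comm (IsGaussian.integrable_id (μ := μ))).trans (by rw [hμ, map_zero])

theorem integral_id_prod_stdGaussian {E' : Type*} [NormedAddCommGroup E'] [InnerProductSpace ℝ E']
    [FiniteDimensional ℝ E'] [MeasurableSpace E'] [BorelSpace E'] :
    ((stdGaussian E).prod (stdGaussian E'))[id] = 0 := by
  have h := IsGaussian.integrable_id (μ := (stdGaussian E).prod (stdGaussian E'))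
  refine Prod.ext ?_ ?_
  · rw [fst_integral h]
    exact (integral_fun_fst (μ := stdGaussian E) (ν := stdGaussian E') id).trans (by simp)
  · rw [snd_integral h]
    exact (integral_fun_snd (μ := stdGaussian E) (ν := stdGaussian E') id).trans (by simp)

variable [Finite W] [Nonempty W]

theorem integral_iInf_add_mul_le {c d : W → ℝ} :
    ∫ η, ⨅ w, (c w + d w * η) ∂stdGaussian ℝ ≤ ⨅ w, c w := by
  have hη : Integrable (fun η : ℝ ↦ η) (stdGaussian ℝ) := IsGaussian.integrable_id
  have hη₀ : ∫ η, η ∂stdGaussian ℝ = 0 := integral_id_stdGaussian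
  have hint : Integrable (fun η ↦ ⨅ w, (c w + d w * η)) (stdGaussian ℝ) := by
    obtain ⟨K, hK⟩ := Finite.exists_le fun w ↦ ‖d w‖₊
    refine integrable_of_lipschitzWith (lipschitzWith_iInf (K := K) (fun w ↦ ?_)
      fun η ↦ Finite.bddBelow_range _)
    exact (LipschitzWith.of_dist_le_mul fun x y ↦ by
      simp [Real.dist_eq, ← mul_sub, abs_mul]).weaken (hK w)
  refine le_ciInf fun w ↦ ?_
  calc ∫ η, ⨅ w, (c w + d w * η) ∂stdGaussian ℝ
      ≤ ∫ η, (c w + d w * η) ∂stdGaussian ℝ :=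
        integral_mono hint ((integrable_const _).add (hη.const_mul _))
          fun η ↦ ciInf_le (Finite.bddBelow_range _) w
    _ = c w := by
        rw [integral_add (integrable_const _) (hη.const_mul _), integral_const_mul, hη₀]
        simp

theorem integral_iInf_coupledProcess_le (t : W → E) :
    ∫ p, ⨅ w, (‖(coupledProcess t p w).1‖ + (coupledProcess t p w).2)
        ∂(stdGaussian (PiLp 2 fun _ : ι ↦ E)).prod (stdGaussian ℝ) ≤
      ∫ G, ⨅ w, ‖rowsApply (ι := ι) (t w) G‖ ∂stdGaussian _ := by
  have hint : Integrable
      (fun p ↦ ⨅ w, (‖(coupledProcess t p w).1‖ + (coupledProcess t p w).2))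
      ((stdGaussian (PiLp 2 fun _ : ι ↦ E)).prod (stdGaussian ℝ)) := by
    obtain ⟨K, hK⟩ := exists_lipschitzWith_iInf_norm_add
      (fun w ↦ fst ℝ _ ℝ ∘L proj w ∘L coupledProcess (ι := ι) t)
      (fun w ↦ snd ℝ _ ℝ ∘L proj w ∘L coupledProcess (ι := ι) t)
    have : IsGaussian ((stdGaussian (PiLp 2 fun _ : ι ↦ E)).prod (stdGaussian ℝ)) := inferInstance
    exact integrable_of_lipschitzWith hK
  have hint' : Integrable (fun G ↦ ⨅ w, ‖rowsApply (ι := ι) (t w) G‖) (stdGaussian _) := by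
    obtain ⟨K, hK⟩ := exists_lipschitzWith_iInf_norm_add (fun w ↦ rowsApply (ι := ι) (t w)) 0
    simpa using integrable_of_lipschitzWith hK (μ := stdGaussian _)
  rw [integral_prod _ hint]
  refine integral_mono hint.integral_prod_left hint' fun G ↦ ?_
  simpa [coupledProcess] using integral_iInf_add_mul_le (c := fun w ↦ ‖rowsApply (t w) G‖)
    (d := fun w ↦ ‖t w‖)

theorem integral_iInf_le_integral_iInf_rowsApply (t : W → E) :
    ∫ p, ⨅ w, (‖t w‖ * ‖p.1‖ + ⟪t w, p.2⟫_ℝ)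
        ∂(stdGaussian (EuclideanSpace ℝ ι)).prod (stdGaussian E) ≤
      ∫ G, ⨅ w, ‖rowsApply (ι := ι) (t w) G‖ ∂stdGaussian _ := by
  have := Fintype.ofFinite W
  have : IsGaussian (((stdGaussian (PiLp 2 fun _ : ι ↦ E)).prod (stdGaussian ℝ)).map
    (coupledProcess t)) := isGaussian_map _
  have h := (gordonDominated_processes (ι := ι) t).integral_iInf_le
    (integral_id_map_eq_zero integral_id_prod_stdGaussian _)
    (integral_id_map_eq_zero integral_id_prod_stdGaussian _)
  obtain ⟨K, hK⟩ := exists_lipschitzWith_iInf_norm_add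
    (fun w : W ↦ fst ℝ (EuclideanSpace ℝ ι) ℝ ∘L proj w) (fun w ↦ snd ℝ _ ℝ ∘L proj w)
  rw [integral_map (by fun_prop) hK.continuous.aestronglyMeasurable,
    integral_map (by fun_prop) hK.continuous.aestronglyMeasurable] at h
  refine (Eq.trans_le ?_ h).trans (integral_iInf_coupledProcess_le t)
  simp [decoupledProcess, norm_smul]

end GordonFinite

section Gordon

open scoped InnerProductSpace NNReal

variable {ι E W : Type*} [Fintype ι] [NormedAddCommGroup E] [InnerProductSpace ℝ E]
  {t : W → E} {R : ℝ≥0}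

theorem bddBelow_range_norm_mul_norm_add_inner (ht : ∀ w, ‖t w‖ ≤ R) (p : EuclideanSpace ℝ ι × E) :
    BddBelow (Set.range fun w ↦ ‖t w‖ * ‖p.1‖ + ⟪t w, p.2⟫_ℝ) := by
  refine ⟨-(R * ‖p.2‖), Set.forall_mem_range.mpr fun w ↦ ?_⟩
  calc -(R * ‖p.2‖) ≤ -(‖t w‖ * ‖p.2‖) := by gcongr; exact ht w
    _ ≤ ⟪t w, p.2⟫_ℝ := neg_le_of_abs_le (abs_real_inner_le_norm _ _)
    _ ≤ ‖t w‖ * ‖p.1‖ + ⟪t w, p.2⟫_ℝ := le_add_of_nonneg_left (by positivity)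

variable [Nonempty W]

theorem lipschitzWith_iInf_norm_rowsApply (ht : ∀ w, ‖t w‖ ≤ R) :
    LipschitzWith R fun G ↦ ⨅ w, ‖rowsApply (ι := ι) (t w) G‖ := by
  refine lipschitzWith_iInf (fun w ↦ .of_dist_le_mul fun G H ↦ ?_) fun G ↦
    ⟨0, Set.forall_mem_range.mpr fun w ↦ norm_nonneg _⟩
  calc dist ‖rowsApply (t w) G‖ ‖rowsApply (t w) H‖ ≤ ‖rowsApply (t w) G - rowsApply (t w) H‖ :=
        abs_norm_sub_norm_le _ _
    _ = ‖rowsApply (t w) (G - H)‖ := by rw [map_sub]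
    _ ≤ ‖t w‖ * ‖G - H‖ := norm_rowsApply_le _ _
    _ ≤ R * dist G H := by rw [dist_eq_norm]; gcongr; exact ht w

theorem lipschitzWith_iInf_norm_mul_norm_add_inner (ht : ∀ w, ‖t w‖ ≤ R) :
    LipschitzWith (2 * R) fun p : EuclideanSpace ℝ ι × E ↦
      ⨅ w, (‖t w‖ * ‖p.1‖ + ⟪t w, p.2⟫_ℝ) := by
  refine lipschitzWith_iInf (fun w ↦ .of_le_add_mul _ fun p q ↦ ?_)
    (bddBelow_range_norm_mul_norm_add_inner ht)
  rw [dist_eq_norm]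
  have h₁ : ‖p.1‖ ≤ ‖q.1‖ + ‖p - q‖ :=
    (norm_le_norm_add_norm_sub' _ _).trans (by gcongr; exact norm_fst_le (p - q))
  have h₂ : ⟪t w, p.2⟫_ℝ ≤ ⟪t w, q.2⟫_ℝ + ‖t w‖ * ‖p - q‖ := by
    rw [← sub_le_iff_le_add', ← inner_sub_right]
    exact (real_inner_le_norm _ _).trans (by gcongr; exact norm_snd_le (p - q))
  calc ‖t w‖ * ‖p.1‖ + ⟪t w, p.2⟫_ℝ
      ≤ ‖t w‖ * (‖q.1‖ + ‖p - q‖) + (⟪t w, q.2⟫_ℝ + ‖t w‖ * ‖p - q‖) := by gcongr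
    _ = ‖t w‖ * ‖q.1‖ + ⟪t w, q.2⟫_ℝ + 2 * ‖t w‖ * ‖p - q‖ := by ring
    _ ≤ ‖t w‖ * ‖q.1‖ + ⟪t w, q.2⟫_ℝ + 2 * R * ‖p - q‖ := by gcongr; exact ht w

theorem iInf_norm_rowsApply_le_add {u : Set E} {ε : ℝ}
    (hu : Set.range t ⊆ ⋃ s ∈ u, Metric.ball s ε) (G : PiLp 2 fun _ : ι ↦ E) :
    ⨅ s : u, ‖rowsApply (s : E) G‖ ≤ (⨅ w, ‖rowsApply (t w) G‖) + ε * ‖G‖ := by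
  rw [← sub_le_iff_le_add]
  refine le_ciInf fun w ↦ sub_le_iff_le_add.mpr ?_
  obtain ⟨s, hs, hws⟩ := Set.mem_iUnion₂.mp (hu ⟨w, rfl⟩)
  calc ⨅ s : u, ‖rowsApply (s : E) G‖ ≤ ‖rowsApply s G‖ :=
        ciInf_le ⟨0, Set.forall_mem_range.mpr fun _ ↦ norm_nonneg _⟩ (⟨s, hs⟩ : u)
    _ ≤ ‖rowsApply (t w) G‖ + ‖rowsApply (t w - s) G‖ := by
        rw [rowsApply_sub]; exact norm_le_norm_add_norm_sub _ _
    _ ≤ ‖rowsApply (t w) G‖ + ε * ‖G‖ := by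
        gcongr
        exact (norm_rowsApply_le _ _).trans (by gcongr; exact (mem_ball_iff_norm.mp hws).le)

variable [FiniteDimensional ℝ E] [MeasurableSpace E] [BorelSpace E]

theorem integrable_iInf_norm_rowsApply (ht : ∀ w, ‖t w‖ ≤ R) :
    Integrable (fun G ↦ ⨅ w, ‖rowsApply (ι := ι) (t w) G‖) (stdGaussian _) :=
  integrable_of_lipschitzWith (lipschitzWith_iInf_norm_rowsApply ht)

theorem integral_iInf_le_integral_iInf_rowsApply_add (ht : ∀ w, ‖t w‖ ≤ R) {ε : ℝ} (hε : 0 < ε) :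
    ∫ p, ⨅ w, (‖t w‖ * ‖p.1‖ + ⟪t w, p.2⟫_ℝ)
        ∂(stdGaussian (EuclideanSpace ℝ ι)).prod (stdGaussian E) ≤
      (∫ G, ⨅ w, ‖rowsApply (ι := ι) (t w) G‖ ∂stdGaussian _) +
        ε * ∫ G : PiLp 2 (fun _ : ι ↦ E), ‖G‖ ∂stdGaussian _ := by
  have htot : TotallyBounded (Set.range t) :=
    (isCompact_closedBall (0 : E) R).totallyBounded.subset <|
      Set.range_subset_iff.mpr fun w ↦ mem_closedBall_zero_iff.mpr (ht w)
  obtain ⟨u, hut, hufin, hu⟩ := Metric.finite_approx_of_totallyBounded htot ε hε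
  have : Fintype u := hufin.fintype
  have : Nonempty u := by
    obtain ⟨s, hs, -⟩ := Set.mem_iUnion₂.mp (hu ⟨Classical.arbitrary W, rfl⟩)
    exact ⟨s, hs⟩
  have hnorm (s : u) : ‖(s : E)‖ ≤ R := by
    obtain ⟨w, hw⟩ := hut s.2
    exact hw ▸ ht w
  have hint : Integrable (fun G : PiLp 2 fun _ : ι ↦ E ↦ ‖G‖) (stdGaussian _) :=
    IsGaussian.integrable_id.norm
  calc _ ≤ ∫ p, ⨅ s : u, (‖(s : E)‖ * ‖p.1‖ + ⟪(s : E), p.2⟫_ℝ)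
          ∂(stdGaussian (EuclideanSpace ℝ ι)).prod (stdGaussian E) := by
        refine integral_mono (integrable_of_lipschitzWith
          (lipschitzWith_iInf_norm_mul_norm_add_inner ht)) (integrable_of_lipschitzWith
          (lipschitzWith_iInf_norm_mul_norm_add_inner hnorm)) fun p ↦ le_ciInf fun s ↦ ?_
        obtain ⟨w, hw⟩ := hut s.2
        rw [← hw]
        exact ciInf_le (bddBelow_range_norm_mul_norm_add_inner ht p) w
    _ ≤ ∫ G, ⨅ s : u, ‖rowsApply (ι := ι) (s : E) G‖ ∂stdGaussian _ :=
        integral_iInf_le_integral_iInf_rowsApply _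
    _ ≤ ∫ G, ((⨅ w, ‖rowsApply (ι := ι) (t w) G‖) + ε * ‖G‖) ∂stdGaussian _ :=
        integral_mono (integrable_iInf_norm_rowsApply hnorm)
          ((integrable_iInf_norm_rowsApply ht).add (hint.const_mul ε))
          (iInf_norm_rowsApply_le_add hu)
    _ = _ := by
        rw [integral_add (integrable_iInf_norm_rowsApply ht) (hint.const_mul ε),
          integral_const_mul]

theorem gordon_comparison (ht : ∀ w, ‖t w‖ ≤ R) :
    ∫ p, ⨅ w, (‖t w‖ * ‖p.1‖ + ⟪t w, p.2⟫_ℝ)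
        ∂(stdGaussian (EuclideanSpace ℝ ι)).prod (stdGaussian E) ≤
      ∫ G, ⨅ w, ‖rowsApply (ι := ι) (t w) G‖ ∂stdGaussian _ := by
  set I := ∫ G : PiLp 2 (fun _ : ι ↦ E), ‖G‖ ∂stdGaussian _
  have hI : 0 ≤ I := integral_nonneg fun _ ↦ norm_nonneg _
  refine le_of_forall_pos_le_add fun δ hδ ↦ ?_
  refine (integral_iInf_le_integral_iInf_rowsApply_add ht (ε := δ / (I + 1))
    (by positivity)).trans (add_le_add_right ?_ _)
  rw [div_mul_eq_mul_div, div_le_iff₀ (by positivity)]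
  nlinarith

end Gordon

section Concentration

open Real Filter Topology

open scoped NNReal

variable {F : Type*} [NormedAddCommGroup F] [NormedSpace ℝ F]

theorem rotation_add_apply (a b : ℝ) (p : F × F) :
    rotation (a + b) p = rotation a (rotation b p) := by
  simp only [ContinuousLinearMap.rotation_apply, cos_add, sin_add]
  ext <;> module

theorem norm_rotation_sub_self_le (θ : ℝ) (p : F × F) :
    ‖rotation θ p - p‖ ≤ 2 * ‖p‖ * |θ| := by
  have h := Convex.norm_image_sub_le_of_norm_hasDerivWithin_le
    (fun s _ ↦ (hasDerivAt_rotation_apply s p).hasDerivWithinAt) (fun s _ ↦ ?_) convex_univ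
    (Set.mem_univ 0) (Set.mem_univ θ) (C := 2 * ‖p‖)
  · simpa [ContinuousLinearMap.rotation_apply] using h
  · rw [Prod.norm_mk, norm_neg, max_comm]
    exact norm_rotation_apply_le s p

variable {f : F → ℝ} {K : ℝ≥0}

theorem abs_sub_rotation_le (hf : LipschitzWith K f) (θ : ℝ) (p : F × F) :
    |f (rotation θ p).1 - f p.1| ≤ K * (2 * ‖p‖ * |θ|) := by
  refine (hf.norm_sub_le _ _).trans ?_
  gcongr
  exact (norm_fst_le (rotation θ p - p)).trans (norm_rotation_sub_self_le θ p)

theorem abs_mul_sub_rotation_le (hf : LipschitzWith K f) (N : ℕ) (p : F × F) :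
    |(N + 1) * (f (rotation (π / 2 / (N + 1)) p).1 - f p.1)| ≤ π * K * ‖p‖ := by
  have hN : (0 : ℝ) < N + 1 := by positivity
  rw [abs_mul, abs_of_pos hN]
  calc (N + 1) * |f (rotation (π / 2 / (N + 1)) p).1 - f p.1|
      ≤ (N + 1) * (K * (2 * ‖p‖ * |π / 2 / (N + 1)|)) := by
        gcongr; exact abs_sub_rotation_le hf _ p
    _ = π * K * ‖p‖ := by rw [abs_of_pos (by positivity)]; field_simp

theorem tendsto_mul_sub_rotation {p : F × F} (hf : DifferentiableAt ℝ f p.1) :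
    Tendsto (fun N : ℕ ↦ (N + 1) * (f (rotation (π / 2 / (N + 1)) p).1 - f p.1)) atTop
      (𝓝 (π / 2 * fderiv ℝ f p.1 p.2)) := by
  have hrot : rotation 0 p = p := by simp [ContinuousLinearMap.rotation_apply]
  have hderiv : HasDerivAt (fun θ ↦ f (rotation θ p).1) (fderiv ℝ f p.1 p.2) 0 := by
    have h := (hasDerivAt_rotation_apply 0 p).fst
    rw [hrot] at h
    exact HasFDerivAt.comp_hasDerivAt_of_eq 0 hf.hasFDerivAt h (by rw [hrot])
  have hθ : Tendsto (fun N : ℕ ↦ π / 2 / ((N : ℝ) + 1)) atTop (𝓝[≠] 0) := by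
    refine tendsto_nhdsWithin_iff.mpr
      ⟨?_, .of_forall fun N ↦ (show 0 < π / 2 / ((N : ℝ) + 1) by positivity).ne'⟩
    exact_mod_cast (tendsto_const_div_atTop_nhds_zero_nat (π / 2)).comp (tendsto_add_atTop_nat 1)
  convert! ((hasDerivAt_iff_tendsto_slope_zero.mp hderiv).comp hθ).const_mul (π / 2) using 2 with N
  simp only [zero_add, hrot, smul_eq_mul, Function.comp_apply, inv_div]
  field_simp

variable [MeasurableSpace F] [BorelSpace F] [CompleteSpace F] [SecondCountableTopology F]
  {μ : Measure F} [IsGaussian μ]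

theorem integrable_exp_mul_norm (c : ℝ) : Integrable (fun x ↦ exp (c * ‖x‖)) μ := by
  obtain ⟨C, hC, hint⟩ := IsGaussian.exists_integrable_exp_sq μ
  refine (hint.const_mul (exp (c ^ 2 / (4 * C)))).mono' (by fun_prop) (.of_forall fun x ↦ ?_)
  rw [norm_of_nonneg (exp_pos _).le, ← exp_add, exp_le_exp]
  calc c * ‖x‖ ≤ c * ‖x‖ + (c - 2 * C * ‖x‖) ^ 2 / (4 * C) := le_add_of_nonneg_right (by positivity)
    _ = c ^ 2 / (4 * C) + C * ‖x‖ ^ 2 := by field_simp; ring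

theorem integrable_exp_of_abs_le {g : F → ℝ} (hg : AEStronglyMeasurable g μ) {a c : ℝ}
    (hgc : ∀ x, |g x| ≤ a + c * ‖x‖) : Integrable (fun x ↦ exp (g x)) μ := by
  refine ((integrable_exp_mul_norm c).const_mul (exp a)).mono'
    (continuous_exp.comp_aestronglyMeasurable hg) (.of_forall fun x ↦ ?_)
  rw [norm_of_nonneg (exp_pos _).le, ← exp_add, exp_le_exp]
  exact (le_abs_self _).trans (hgc x)

theorem integrable_exp_of_lipschitzWith (hf : LipschitzWith K f) :
    Integrable (fun x ↦ exp (f x)) μ := by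
  refine integrable_exp_of_abs_le hf.continuous.aestronglyMeasurable (a := |f 0|) (c := K)
    fun x ↦ ?_
  have h := hf.norm_sub_le x 0
  rw [sub_zero] at h
  exact (norm_le_norm_add_norm_sub' (f x) (f 0)).trans (add_le_add_right h _)

theorem exp_sum_range_le {a : ℕ → ℝ} (N : ℕ) :
    exp (∑ j ∈ Finset.range (N + 1), a j) ≤
      ∑ j ∈ Finset.range (N + 1), (N + 1 : ℝ)⁻¹ * exp ((N + 1) * a j) := by
  have h := convexOn_exp.map_sum_le (t := Finset.range (N + 1)) (w := fun _ ↦ (N + 1 : ℝ)⁻¹)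
    (p := fun j ↦ (N + 1) * a j) (fun _ _ ↦ by positivity)
    (by simp only [Finset.sum_const, Finset.card_range, nsmul_eq_mul, Nat.cast_add, Nat.cast_one]
        field_simp)
    (fun _ _ ↦ Set.mem_univ _)
  simpa [← mul_assoc, inv_mul_cancel₀ (Nat.cast_add_one_ne_zero (R := ℝ) N)] using h

-- The quarter turn from `p.1` to `p.2` is cut into `N + 1` equal rotations, each of which preserves
-- `μ.prod μ`; convexity of `exp` reduces the telescoping sum to a single one of them.
theorem integral_exp_sub_le_of_rotation (hμ : μ[id] = 0) (hf : LipschitzWith K f) (N : ℕ) :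
    ∫ p, exp (f p.2 - f p.1) ∂(μ.prod μ) ≤
      ∫ p, exp ((N + 1) * (f (rotation (π / 2 / (N + 1)) p).1 - f p.1)) ∂(μ.prod μ) := by
  set θ : ℝ := π / 2 / (N + 1) with hθ
  set D : F × F → ℝ := fun p ↦ exp ((N + 1) * (f (rotation θ p).1 - f p.1))
  have hfc := hf.continuous
  have hDc : Continuous D := by fun_prop
  have hint : Integrable D (μ.prod μ) :=
    integrable_exp_of_abs_le (a := 0) (by fun_prop) fun p ↦ by
      simpa using abs_mul_sub_rotation_le hf N p
  have hrot (j : ℕ) : Integrable (fun p ↦ D (rotation (j * θ) p)) (μ.prod μ) :=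
    (MeasurePreserving.mk (by fun_prop)
      (IsGaussian.map_rotation_eq_self hμ _)).integrable_comp_of_integrable hint
  have htele (p : F × F) : f p.2 - f p.1 = ∑ j ∈ Finset.range (N + 1),
      (f (rotation θ (rotation (j * θ) p)).1 - f (rotation (j * θ) p).1) := by
    have h := Finset.sum_range_sub (fun j : ℕ ↦ f (rotation (j * θ) p).1) (N + 1)
    have hlast : ((N + 1 : ℕ) : ℝ) * θ = π / 2 := by rw [hθ]; push_cast; field_simp
    simp only [← rotation_add_apply]
    simp only [hlast] at h
    simpa [ContinuousLinearMap.rotation_apply, add_mul, add_comm] using h.symm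
  calc ∫ p, exp (f p.2 - f p.1) ∂(μ.prod μ)
      ≤ ∫ p, ∑ j ∈ Finset.range (N + 1), (N + 1 : ℝ)⁻¹ * D (rotation (j * θ) p) ∂(μ.prod μ) := by
        refine integral_mono_of_nonneg (.of_forall fun p ↦ (exp_pos _).le)
          (integrable_finsetSum _ fun _ _ ↦ (hrot _).const_mul _) (.of_forall fun p ↦ ?_)
        beta_reduce
        rw [htele p]
        exact exp_sum_range_le N
    _ = ∑ _j ∈ Finset.range (N + 1), (N + 1 : ℝ)⁻¹ * ∫ p, D p ∂(μ.prod μ) := by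
        rw [integral_finsetSum _ fun j _ ↦ (hrot j).const_mul _]
        simp_rw [integral_const_mul, integral_comp_rotation hμ hDc]
    _ = ∫ p, D p ∂(μ.prod μ) := by
        rw [← Finset.sum_mul]
        simp [mul_inv_cancel₀ (Nat.cast_add_one_ne_zero (R := ℝ) N)]

theorem integral_exp_sub_le_integral_exp_fderiv (hμ : μ[id] = 0) (hf : LipschitzWith K f)
    (hdiff : ∀ᵐ x ∂μ, DifferentiableAt ℝ f x) :
    ∫ p, exp (f p.2 - f p.1) ∂(μ.prod μ) ≤
      ∫ p, exp (π / 2 * fderiv ℝ f p.1 p.2) ∂(μ.prod μ) := by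
  have hfc := hf.continuous
  refine ge_of_tendsto' (tendsto_integral_of_dominated_convergence (fun p ↦ exp (π * K * ‖p‖))
    (fun N ↦ by fun_prop) (integrable_exp_mul_norm _) (fun N ↦ .of_forall fun p ↦ ?_) ?_)
    (integral_exp_sub_le_of_rotation hμ hf)
  · rw [norm_of_nonneg (exp_pos _).le, exp_le_exp]
    exact (le_abs_self _).trans (abs_mul_sub_rotation_le hf N p)
  · filter_upwards [Measure.quasiMeasurePreserving_fst.ae hdiff] with p hp
    exact (continuous_exp.tendsto _).comp (tendsto_mul_sub_rotation hp)

end Concentration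

section StdGaussianConcentration

open Real

open scoped NNReal

theorem absolutelyContinuous_pi_fin {n : ℕ} {X : Fin n → Type*} [∀ i, MeasurableSpace (X i)]
    {μ ν : ∀ i, Measure (X i)} [∀ i, SigmaFinite (μ i)] [∀ i, SigmaFinite (ν i)]
    (h : ∀ i, μ i ≪ ν i) : Measure.pi μ ≪ Measure.pi ν := by
  induction n with
  | zero => rw [Measure.pi_of_empty, Measure.pi_of_empty]
  | succ n ih =>
    have hμ := (measurePreserving_piFinSuccAbove μ 0).symm
    have hν := (measurePreserving_piFinSuccAbove ν 0).symm
    rw [← hμ.map_eq, ← hν.map_eq]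
    exact ((h 0).prod (ih fun i ↦ h _)).map hμ.measurable

variable {E : Type*} [NormedAddCommGroup E] [InnerProductSpace ℝ E] [FiniteDimensional ℝ E]
  [MeasurableSpace E] [BorelSpace E]

variable (E) in
theorem stdGaussian_absolutelyContinuous : stdGaussian E ≪ volume := by
  set b := stdOrthonormalBasis ℝ E
  rw [← stdGaussian_map b.repr.symm, ← b.measurePreserving_repr_symm.map_eq,
    ← map_pi_eq_stdGaussian, ← (PiLp.volume_preserving_toLp _).map_eq]
  exact ((absolutelyContinuous_pi_fin fun _ ↦
    gaussianReal_absolutelyContinuous 0 one_ne_zero).map (by fun_prop)).map (by fun_prop)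

theorem integral_exp_strongDual_stdGaussian (L : StrongDual ℝ E) :
    ∫ x, exp (L x) ∂(stdGaussian E) = exp (‖L‖ ^ 2 / 2) := by
  simpa [mgf, variance_dual_stdGaussian] using
    mgf_gaussianReal (IsGaussian.map_eq_gaussianReal (μ := stdGaussian E) L) 1

variable {f : E → ℝ} {K : ℝ≥0}

theorem integral_exp_fderiv_stdGaussian_le (hf : LipschitzWith K f) :
    ∫ p, exp (π / 2 * fderiv ℝ f p.1 p.2) ∂((stdGaussian E).prod (stdGaussian E)) ≤
      exp ((π / 2 * K) ^ 2 / 2) := by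
  have hmeas : Measurable fun p : E × E ↦ fderiv ℝ f p.1 p.2 :=
    isBoundedBilinearMap_apply.continuous.measurable.comp
      (((measurable_fderiv ℝ f).comp measurable_fst).prodMk measurable_snd)
  have hint : Integrable (fun p : E × E ↦ exp (π / 2 * fderiv ℝ f p.1 p.2))
      ((stdGaussian E).prod (stdGaussian E)) := by
    refine integrable_exp_of_abs_le (a := 0) (c := π / 2 * K) (by fun_prop) fun p ↦ ?_
    rw [abs_mul, abs_of_pos (by positivity), zero_add, mul_assoc]
    gcongr
    exact (fderiv ℝ f p.1).le_of_opNorm_le_of_le (norm_fderiv_le_of_lipschitz ℝ hf) (norm_snd_le p)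
  rw [integral_prod _ hint]
  calc ∫ x, ∫ y, exp (π / 2 * fderiv ℝ f x y) ∂stdGaussian E ∂stdGaussian E
      = ∫ x, exp (‖(π / 2) • fderiv ℝ f x‖ ^ 2 / 2) ∂stdGaussian E := by
        simp_rw [← integral_exp_strongDual_stdGaussian]; rfl
    _ ≤ ∫ _, exp ((π / 2 * K) ^ 2 / 2) ∂stdGaussian E := by
        refine integral_mono_of_nonneg (.of_forall fun x ↦ (exp_pos _).le) (integrable_const _)
          (.of_forall fun x ↦ ?_)
        dsimp only
        rw [norm_smul, norm_of_nonneg (by positivity)]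
        gcongr
        exact norm_fderiv_le_of_lipschitz ℝ hf
    _ = exp ((π / 2 * K) ^ 2 / 2) := by simp

theorem integral_exp_sub_integral_stdGaussian_le (hf : LipschitzWith K f) :
    ∫ x, exp (f x - ∫ y, f y ∂stdGaussian E) ∂stdGaussian E ≤ exp ((π / 2 * K) ^ 2 / 2) := by
  have hjensen : exp (-∫ y, f y ∂stdGaussian E) ≤ ∫ y, exp (-f y) ∂stdGaussian E := by
    rw [← integral_neg]
    exact convexOn_exp.map_integral_le continuous_exp.continuousOn isClosed_univ (by simp)
      (integrable_of_lipschitzWith hf).neg (integrable_exp_of_lipschitzWith hf.neg)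
  calc ∫ x, exp (f x - ∫ y, f y ∂stdGaussian E) ∂stdGaussian E
      = exp (-∫ y, f y ∂stdGaussian E) * ∫ x, exp (f x) ∂stdGaussian E := by
        rw [← integral_const_mul]
        simp_rw [← exp_add, neg_add_eq_sub]
    _ ≤ (∫ y, exp (-f y) ∂stdGaussian E) * ∫ x, exp (f x) ∂stdGaussian E := by
        gcongr
    _ = ∫ p, exp (f p.2 - f p.1) ∂(stdGaussian E).prod (stdGaussian E) := by
        rw [← integral_prod_mul]
        simp_rw [← exp_add, neg_add_eq_sub]
    _ ≤ ∫ p, exp (π / 2 * fderiv ℝ f p.1 p.2) ∂(stdGaussian E).prod (stdGaussian E) :=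
        integral_exp_sub_le_integral_exp_fderiv integral_id_stdGaussian hf
          ((stdGaussian_absolutelyContinuous E).ae_le hf.ae_differentiableAt)
    _ ≤ exp ((π / 2 * K) ^ 2 / 2) := integral_exp_fderiv_stdGaussian_le hf

theorem hasSubgaussianMGF_sub_integral_stdGaussian (hf : LipschitzWith K f) :
    HasSubgaussianMGF (fun x ↦ f x - ∫ y, f y ∂stdGaussian E) ((NNReal.pi / 2 * K) ^ 2)
      (stdGaussian E) := by
  have hlip (t : ℝ) : LipschitzWith (‖t‖₊ * K) fun x ↦ t * f x := (lipschitzWith_smul t).comp hf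
  refine ⟨fun t ↦ ?_, fun t ↦ ?_⟩
  · simpa only [mul_sub, exp_sub] using (integrable_exp_of_lipschitzWith (hlip t)).div_const _
  · have h := integral_exp_sub_integral_stdGaussian_le (hlip t)
    rw [integral_const_mul] at h
    simp only [mgf, mul_sub]
    refine h.trans_eq ?_
    push_cast
    rw [norm_eq_abs, mul_left_comm, mul_pow, sq_abs, NNReal.coe_real_pi]
    ring_nf

theorem stdGaussian_real_le_integral_sub (hf : LipschitzWith K f) {s : ℝ} (hs : 0 ≤ s) :
    (stdGaussian E).real {x | f x ≤ ∫ y, f y ∂stdGaussian E - s} ≤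
      exp (-s ^ 2 / (2 * (π / 2 * K) ^ 2)) := by
  convert! (hasSubgaussianMGF_sub_integral_stdGaussian hf).neg.measure_ge_le hs using 4 with x
  simp [le_sub_comm]

end StdGaussianConcentration

section GordonTail

open Real

open scoped InnerProductSpace NNReal

variable {ι E W : Type*} [Fintype ι] [NormedAddCommGroup E] [InnerProductSpace ℝ E]
  [FiniteDimensional ℝ E] [MeasurableSpace E] [BorelSpace E] [Nonempty W] {t : W → E} {R : ℝ≥0}

theorem stdGaussian_real_iInf_norm_rowsApply_le (ht : ∀ w, ‖t w‖ ≤ R) {s : ℝ} (hs : 0 ≤ s) :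
    (stdGaussian (PiLp 2 fun _ : ι ↦ E)).real {G | ⨅ w, ‖rowsApply (t w) G‖ ≤
      ∫ p, ⨅ w, (‖t w‖ * ‖p.1‖ + ⟪t w, p.2⟫_ℝ)
        ∂(stdGaussian (EuclideanSpace ℝ ι)).prod (stdGaussian E) - s} ≤
      exp (-s ^ 2 / (2 * (π / 2 * R) ^ 2)) := by
  refine (measureReal_mono fun G hG ↦ ?_).trans
    (stdGaussian_real_le_integral_sub (lipschitzWith_iInf_norm_rowsApply ht) hs)
  exact hG.trans (sub_le_sub_right (gordon_comparison ht) s)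

end GordonTail

section Lasso

open Real

open scoped InnerProductSpace NNReal

variable {m n : ℕ} {σ Cw : ℝ} {xt : Fin n → ℝ}

/-- The set `S_w` of error vectors `w = x - xt` over which `xiFun` is minimized. -/
def errorSet (Cw : ℝ) (xt : Fin n → ℝ) : Set (Fin n → ℝ) :=
  {w | e2norm w ≤ Cw ∧ l1norm (xt + w) ≤ l1norm xt}

/-- The vector `(w, -σ)`, which absorbs the noise into one more Gaussian column: the residual
`v - A w` of the LASSO is `-[A | v / σ] (w, -σ)`. -/
def augment (σ : ℝ) (w : Fin n → ℝ) : WithLp 2 (EuclideanSpace ℝ (Fin n) × ℝ) :=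
  WithLp.toLp 2 (WithLp.toLp 2 w, -σ)

/-- The rows of the matrix `[A | v / σ]` of the sample `ω = (A, v)`. -/
noncomputable def augmentedRows (σ : ℝ) (ω : (Fin m → Fin n → ℝ) × (Fin m → ℝ)) :
    PiLp 2 fun _ : Fin m ↦ WithLp 2 (EuclideanSpace ℝ (Fin n) × ℝ) :=
  WithLp.toLp 2 fun i ↦ WithLp.toLp 2 (WithLp.toLp 2 (ω.1 i), ω.2 i / σ)

theorem e2norm_eq_norm_toLp {d : ℕ} (x : Fin d → ℝ) : e2norm x = ‖WithLp.toLp 2 x‖ := by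
  simp [e2norm, EuclideanSpace.norm_eq]

theorem norm_augment (σ : ℝ) (w : Fin n → ℝ) : ‖augment σ w‖ = √(e2norm w ^ 2 + σ ^ 2) := by
  simp [augment, WithLp.prod_norm_eq_of_L2, e2norm_eq_norm_toLp]

theorem inner_augment (σ : ℝ) (w : Fin n → ℝ) (q : WithLp 2 (EuclideanSpace ℝ (Fin n) × ℝ)) :
    ⟪augment σ w, q⟫_ℝ = ∑ i, q.fst i * w i - σ * q.snd := by
  simp [augment, PiLp.inner_apply, sub_eq_add_neg, mul_comm]

theorem norm_rowsApply_augment (hσ : σ ≠ 0) (w : Fin n → ℝ)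
    (ω : (Fin m → Fin n → ℝ) × (Fin m → ℝ)) :
    ‖rowsApply (augment σ w) (augmentedRows σ ω)‖ = lassoVal m n xt ω (xt + w) := by
  rw [lassoVal, e2norm_eq_norm_toLp, ← norm_neg]
  congr 1
  ext i
  have hrow : ⟪augment σ w, augmentedRows σ ω i⟫_ℝ = ∑ j, ω.1 i j * w j - ω.2 i := by
    rw [inner_augment]
    exact congrArg _ (mul_div_cancel₀ (ω.2 i) hσ)
  simp [hrow, mul_add, Finset.sum_add_distrib]

theorem norm_augment_le {w : Fin n → ℝ} (hw : w ∈ errorSet Cw xt) :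
    ‖augment σ w‖ ≤ (√(Cw ^ 2 + σ ^ 2)).toNNReal := by
  rw [norm_augment, coe_toNNReal _ (sqrt_nonneg _)]
  gcongr
  · exact Real.sqrt_nonneg _
  · exact hw.1

theorem nonempty_errorSet (hCw : 0 ≤ Cw) (xt : Fin n → ℝ) : (errorSet Cw xt).Nonempty :=
  ⟨0, by simpa [e2norm] using hCw, by simp⟩

theorem measurePreserving_ofLp_stdGaussian {ι : Type*} [Fintype ι] :
    MeasurePreserving WithLp.ofLp (stdGaussian (EuclideanSpace ℝ ι))
      (Measure.pi fun _ ↦ gaussianReal 0 1) :=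
  (show MeasurePreserving (MeasurableEquiv.toLp 2 (ι → ℝ)) _ _ from
    ⟨by fun_prop, map_pi_eq_stdGaussian⟩).symm

theorem stdGaussian_real_eq_gaussianReal : stdGaussian ℝ = gaussianReal 0 1 :=
  Measure.ext_of_charFun <| funext fun t ↦ by
    simp [charFun_stdGaussian, charFun_gaussianReal, ← Complex.ofReal_pow, neg_div]

theorem measurePreserving_div_gaussianReal (hσ : σ ≠ 0) :
    MeasurePreserving (· / σ) (gaussianReal 0 (σ ^ 2).toNNReal) (stdGaussian ℝ) := by
  refine ⟨by fun_prop, ?_⟩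
  have hvar : (σ ^ 2).toNNReal / ⟨σ ^ 2, sq_nonneg σ⟩ = 1 := by
    rw [Real.toNNReal_of_nonneg (sq_nonneg σ)]
    exact div_self fun h ↦ hσ (pow_eq_zero_iff two_ne_zero |>.mp (congrArg NNReal.toReal h))
  rw [gaussianReal_map_div_const, stdGaussian_real_eq_gaussianReal, zero_div]
  exact congrArg _ hvar

theorem measurePreserving_augmentedRows (hσ : σ ≠ 0) :
    MeasurePreserving (augmentedRows σ) (muAv m n σ) (stdGaussian _) := by
  have hrow : MeasurePreserving
      (fun q : (Fin n → ℝ) × ℝ ↦ WithLp.toLp 2 (WithLp.toLp 2 q.1, q.2 / σ))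
      ((Measure.pi fun _ ↦ gaussianReal 0 1).prod (gaussianReal 0 (σ ^ 2).toNNReal))
      (stdGaussian (WithLp 2 (EuclideanSpace ℝ (Fin n) × ℝ))) :=
    (MeasurePreserving.mk (by fun_prop) map_toLp_prod_stdGaussian).comp
      ((MeasurePreserving.mk (by fun_prop) map_pi_eq_stdGaussian).prod
        (measurePreserving_div_gaussianReal hσ))
  exact (MeasurePreserving.mk (by fun_prop) map_toLp_pi_stdGaussian).comp
    ((measurePreserving_pi _ _ fun _ : Fin m ↦ hrow).comp
      (measurePreserving_arrowProdEquivProdArrow _ _ _ _ _).symm)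

theorem xiFun_ofLp (hCw : 0 ≤ Cw)
    (p : EuclideanSpace ℝ (Fin m) × WithLp 2 (EuclideanSpace ℝ (Fin n) × ℝ)) :
    xiFun m n σ Cw xt (p.1.ofLp, p.2.fst.ofLp) =
      (⨅ w : errorSet Cw xt, (‖augment σ w.1‖ * ‖p.1‖ + ⟪augment σ w.1, p.2⟫_ℝ)) +
        σ * p.2.snd := by
  have : Nonempty (errorSet Cw xt) := (nonempty_errorSet hCw xt).to_subtype
  rw [ciInf_add (bddBelow_range_norm_mul_norm_add_inner
    (fun w : errorSet Cw xt ↦ norm_augment_le w.2) p), xiFun, sInf_image']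
  refine iInf_congr fun w ↦ ?_
  rw [norm_augment, inner_augment, e2norm_eq_norm_toLp p.1.ofLp]
  simp only [WithLp.toLp_ofLp]
  ring

theorem continuous_xiFun (hCw : 0 ≤ Cw) : Continuous (xiFun m n σ Cw xt) := by
  have : Nonempty (errorSet Cw xt) := (nonempty_errorSet hCw xt).to_subtype
  have hxi : xiFun m n σ Cw xt = _ := funext fun p ↦
    xiFun_ofLp hCw (WithLp.toLp 2 p.1, WithLp.toLp 2 (WithLp.toLp 2 p.2, 0))
  rw [hxi]
  exact ((lipschitzWith_iInf_norm_mul_norm_add_inner fun w : errorSet Cw xt ↦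
    norm_augment_le w.2).continuous.comp (by fun_prop)).add (by fun_prop)

theorem measurePreserving_ofLp_prod :
    MeasurePreserving (fun p : EuclideanSpace ℝ (Fin m) × WithLp 2 (EuclideanSpace ℝ (Fin n) × ℝ) ↦
      (p.1.ofLp, p.2.fst.ofLp)) ((stdGaussian _).prod (stdGaussian _)) (muGH m n) :=
  measurePreserving_ofLp_stdGaussian.prod <| measurePreserving_ofLp_stdGaussian.comp <|
    measurePreserving_fst.comp (show MeasurePreserving (MeasurableEquiv.toLp 2
      (EuclideanSpace ℝ (Fin n) × ℝ)) _ _ from ⟨by fun_prop, map_toLp_prod_stdGaussian⟩).symm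

theorem integral_iInf_augment_eq (hCw : 0 ≤ Cw) :
    ∫ p, ⨅ w : errorSet Cw xt, (‖augment σ w.1‖ * ‖p.1‖ + ⟪augment σ w.1, p.2⟫_ℝ)
        ∂(stdGaussian (EuclideanSpace ℝ (Fin m))).prod (stdGaussian _) =
      ∫ p, xiFun m n σ Cw xt p ∂muGH m n := by
  have : Nonempty (errorSet Cw xt) := (nonempty_errorSet hCw xt).to_subtype
  have hlip := lipschitzWith_iInf_norm_mul_norm_add_inner (ι := Fin m)
    (t := fun w : errorSet Cw xt ↦ augment σ w.1) fun w ↦ norm_augment_le w.2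
  have hsnd : ∫ p, p.2.snd ∂(stdGaussian (EuclideanSpace ℝ (Fin m))).prod
      (stdGaussian (WithLp 2 (EuclideanSpace ℝ (Fin n) × ℝ))) = 0 := by
    rw [integral_fun_snd (f := fun q : WithLp 2 (EuclideanSpace ℝ (Fin n) × ℝ) ↦ q.snd)]
    simpa using integral_strongDual_stdGaussian (WithLp.sndL 2 ℝ (EuclideanSpace ℝ (Fin n)) ℝ)
  have hint : Integrable (fun p ↦ p.2.snd) ((stdGaussian (EuclideanSpace ℝ (Fin m))).prod
      (stdGaussian (WithLp 2 (EuclideanSpace ℝ (Fin n) × ℝ)))) :=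
    IsGaussian.integrable_dual _ (WithLp.sndL 2 ℝ (EuclideanSpace ℝ (Fin n)) ℝ ∘L
      ContinuousLinearMap.snd ℝ (EuclideanSpace ℝ (Fin m)) _)
  rw [← measurePreserving_ofLp_prod.map_eq, integral_map (by fun_prop)
    (continuous_xiFun hCw).aestronglyMeasurable]
  simp_rw [xiFun_ofLp hCw]
  rw [integral_add (integrable_of_lipschitzWith hlip) (hint.const_mul σ), integral_const_mul, hsnd,
    mul_zero, add_zero]

theorem muAv_real_iInf_lassoVal_le (hσ : σ ≠ 0) (hCw : 0 ≤ Cw) {s : ℝ} (hs : 0 ≤ s) :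
    (muAv m n σ).real {ω | ⨅ w : errorSet Cw xt, lassoVal m n xt ω (xt + w) ≤
        ∫ p, xiFun m n σ Cw xt p ∂muGH m n - s} ≤
      exp (-s ^ 2 / (2 * ((π / 2) ^ 2 * (Cw ^ 2 + σ ^ 2)))) := by
  have : Nonempty (errorSet Cw xt) := (nonempty_errorSet hCw xt).to_subtype
  have ht (w : errorSet Cw xt) : ‖augment σ w.1‖ ≤ (√(Cw ^ 2 + σ ^ 2)).toNNReal :=
    norm_augment_le w.2
  have h := stdGaussian_real_iInf_norm_rowsApply_le (ι := Fin m) ht hs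
  rw [integral_iInf_augment_eq hCw, ← (measurePreserving_augmentedRows hσ).measureReal_preimage
    (measurableSet_le (lipschitzWith_iInf_norm_rowsApply ht).continuous.measurable
      measurable_const).nullMeasurableSet] at h
  simpa only [Set.preimage_ofPred_eq, norm_rowsApply_augment (xt := xt) hσ, mul_pow,
    coe_toNNReal _ (sqrt_nonneg _), sq_sqrt (by positivity : 0 ≤ Cw ^ 2 + σ ^ 2)] using h

theorem iInf_lassoVal_le_zetaObj {ω : (Fin m → Fin n → ℝ) × (Fin m → ℝ)} {xh : Fin n → ℝ}
    (hxh : l1norm xh ≤ l1norm xt) (hval : lassoVal m n xt ω xh = zetaObj m n xt ω)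
    (hdist : e2norm (xh - xt) ≤ Cw) :
    ⨅ w : errorSet Cw xt, lassoVal m n xt ω (xt + w) ≤ zetaObj m n xt ω := by
  have hmem : xh - xt ∈ errorSet Cw xt := ⟨hdist, by simpa using hxh⟩
  calc ⨅ w : errorSet Cw xt, lassoVal m n xt ω (xt + w) ≤ lassoVal m n xt ω (xt + (xh - xt)) :=
        ciInf_le ⟨0, Set.forall_mem_range.mpr fun _ ↦ Real.sqrt_nonneg _⟩
          (⟨_, hmem⟩ : errorSet Cw xt)
    _ = zetaObj m n xt ω := by rw [add_sub_cancel, hval]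

theorem zetaObj_nonneg (m n : ℕ) (xt : Fin n → ℝ) (ω : (Fin m → Fin n → ℝ) × (Fin m → ℝ)) :
    0 ≤ zetaObj m n xt ω :=
  Real.sInf_nonneg fun _ ⟨_, _, hr⟩ ↦ hr ▸ Real.sqrt_nonneg _

instance isProbabilityMeasure_muAv : IsProbabilityMeasure (muAv m n σ) := by
  unfold muAv
  infer_instance

theorem ofReal_le_muAv_le_zetaObj (hσ : σ ≠ 0) (hCw : 0 ≤ Cw) {δ : ℝ}
    (hmin : ENNReal.ofReal (1 - δ) ≤ muAv m n σ
      {ω | ∃ xh : Fin n → ℝ, l1norm xh ≤ l1norm xt ∧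
        lassoVal m n xt ω xh = zetaObj m n xt ω ∧ e2norm (xh - xt) ≤ Cw})
    {s : ℝ} (hs : 0 ≤ s) :
    ENNReal.ofReal (1 - exp (-s ^ 2 / (2 * ((π / 2) ^ 2 * (Cw ^ 2 + σ ^ 2)))) - δ) ≤
      muAv m n σ {ω | ∫ p, xiFun m n σ Cw xt p ∂muGH m n - s ≤ zetaObj m n xt ω} := by
  set τ := exp (-s ^ 2 / (2 * ((π / 2) ^ 2 * (Cw ^ 2 + σ ^ 2))))
  set a := ∫ p, xiFun m n σ Cw xt p ∂muGH m n - s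
  have htail : muAv m n σ {ω | ⨅ w : errorSet Cw xt, lassoVal m n xt ω (xt + w) ≤ a} ≤
      ENNReal.ofReal τ :=
    (ENNReal.le_ofReal_iff_toReal_le (measure_ne_top _ _) (exp_pos _).le).mpr
      (muAv_real_iInf_lassoVal_le hσ hCw hs)
  rw [sub_right_comm, ENNReal.ofReal_sub _ (exp_pos _).le, tsub_le_iff_right]
  refine (hmin.trans (measure_mono ?_)).trans
    ((measure_union_le _ _).trans (add_le_add_right htail _))
  rintro ω ⟨xh, hxh, hval, hdist⟩
  have h := iInf_lassoVal_le_zetaObj hxh hval hdist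
  exact (le_total a _).imp h.trans' id

theorem exp_neg_sq_div_le_add {a c s L M : ℝ} (ha : 0 ≤ a) (hc : 0 ≤ c) (hs : a + c ≤ s)
    (hM : 0 < M) (hML : M ≤ L) :
    exp (-s ^ 2 / (2 * ((π / 2) ^ 2 * M))) ≤ exp (-a ^ 2 / (2 * L)) + exp (-c ^ 2 / (2 * M)) := by
  have key {b : ℝ} (hb : 0 ≤ b) (hbs : 2 * b ≤ s) :
      exp (-s ^ 2 / (2 * ((π / 2) ^ 2 * M))) ≤ exp (-b ^ 2 / (2 * M)) := by
    have hπ : π / 2 ≤ 2 := by linarith [pi_le_four]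
    rw [exp_le_exp, neg_div, neg_div, neg_le_neg_iff]
    calc b ^ 2 / (2 * M) = (2 * b) ^ 2 / (2 * (2 ^ 2 * M)) := by field_simp
      _ ≤ s ^ 2 / (2 * ((π / 2) ^ 2 * M)) := by gcongr
  rcases le_total a c with hac | hca
  · refine (key ha (by linarith)).trans (le_add_of_le_of_nonneg ?_ (exp_pos _).le)
    rw [exp_le_exp, neg_div, neg_div, neg_le_neg_iff]
    gcongr
  · exact (key hc (by linarith)).trans (le_add_of_nonneg_left (exp_pos _).le)

end Lasso

theorem lasso_stmt13_general {m n : ℕ} {xt : Fin n → ℝ} {σ Cw δ : ℝ} (hσ : σ ≠ 0) (hCw : 0 ≤ Cw)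
    (hmin : muAv m n σ
        {ω | ∃ xh : Fin n → ℝ, l1norm xh ≤ l1norm xt ∧
          lassoVal m n xt ω xh = zetaObj m n xt ω ∧ e2norm (xh - xt) ≤ Cw}
      ≥ ENNReal.ofReal (1 - δ))
    {ε₁ ε₂ ε₃ : ℝ} (hε₁ : ε₁ ∈ Set.Icc 0 1) (hε₂ : 0 ≤ ε₂) (hε₃ : 0 ≤ ε₃) :
    muAv m n σ
        {ω | (1 - ε₁) * (∫ p, xiFun m n σ Cw xt p ∂(muGH m n))
              - (ε₂ + ε₃) * Real.sqrt n ≤ zetaObj m n xt ω}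
      ≥ ENNReal.ofReal
          (1 - 2 * Real.exp (-(ε₁ * ∫ p, xiFun m n σ Cw xt p ∂(muGH m n)) ^ 2
                / (2 * (2 * Cw ^ 2 + σ ^ 2)))
            - Real.exp (-(ε₂ ^ 2 * n) / (2 * σ ^ 2))
            - Real.exp (-(ε₃ ^ 2 * n) / (2 * (Cw ^ 2 + σ ^ 2)))
            - δ) := by
  set E := ∫ p, xiFun m n σ Cw xt p ∂muGH m n
  rcases lt_or_ge E 0 with hE | hE
  · refine (ENNReal.ofReal_le_ofReal ?_).trans (hmin.trans (measure_mono fun ω _ ↦ ?_))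
    · gcongr
      exact (sub_le_self _ (Real.exp_pos _).le).trans <|
        (sub_le_self _ (Real.exp_pos _).le).trans <| sub_le_self _ (by positivity)
    · have h₁ : (1 - ε₁) * E ≤ 0 := mul_nonpos_of_nonneg_of_nonpos (sub_nonneg.mpr hε₁.2) hE.le
      exact (sub_nonpos_of_le (h₁.trans (by positivity))).trans (zetaObj_nonneg m n xt ω)
  · have h₁ : 0 ≤ ε₁ * E := mul_nonneg hε₁.1 hE
    have h := ofReal_le_muAv_le_zetaObj hσ hCw hmin (s := ε₁ * E + (ε₂ + ε₃) * √n)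
      (by positivity)
    have hexp := exp_neg_sq_div_le_add (s := ε₁ * E + (ε₂ + ε₃) * √n) (M := Cw ^ 2 + σ ^ 2)
      (L := 2 * Cw ^ 2 + σ ^ 2) h₁ (by positivity : 0 ≤ ε₃ * √n)
      (by gcongr; exact le_add_of_nonneg_left hε₂) (by positivity)
      (by linarith [sq_nonneg Cw])
    rw [mul_pow ε₃, Real.sq_sqrt n.cast_nonneg] at hexp
    refine (ENNReal.ofReal_le_ofReal ?_).trans (h.trans_eq ?_)
    · linarith [Real.exp_pos (-(ε₁ * E) ^ 2 / (2 * (2 * Cw ^ 2 + σ ^ 2))),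
        Real.exp_pos (-(ε₂ ^ 2 * n) / (2 * σ ^ 2))]
    · rw [show (1 - ε₁) * E - (ε₂ + ε₃) * √n = E - (ε₁ * E + (ε₂ + ε₃) * √n) by ring]

theorem lasso_stmt13 (m n k : ℕ) (hm : 1 ≤ m) (hn : 1 ≤ n) (hk1 : 1 ≤ k) (hkn : k ≤ n)
    (xt : Fin n → ℝ) (hxt : kSparseNonneg n k xt)
    (σ Cw εC : ℝ) (hσ : 0 < σ) (hCw : 0 < Cw) (hεC : 0 < εC)
    (hEξ : 0 ≤ ∫ p, xiFun m n σ Cw xt p ∂(muGH m n))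
    (hmin : muAv m n σ
        {ω | ∃ xh : Fin n → ℝ, l1norm xh ≤ l1norm xt ∧
          lassoVal m n xt ω xh = zetaObj m n xt ω ∧ e2norm (xh - xt) ≤ Cw}
      ≥ ENNReal.ofReal (1 - Real.exp (-(εC * n)))) :
    ∀ ε₁ ∈ Set.Ioo (0 : ℝ) 1, ∀ ε₂ ∈ Set.Ioo (0 : ℝ) 1, ∀ ε₃ ∈ Set.Ioo (0 : ℝ) 1,
      muAv m n σ
        {ω | (1 - ε₁) * (∫ p, xiFun m n σ Cw xt p ∂(muGH m n))
              - (ε₂ + ε₃) * Real.sqrt n ≤ zetaObj m n xt ω}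
      ≥ ENNReal.ofReal
          (1 - 2 * Real.exp (-(ε₁ * ∫ p, xiFun m n σ Cw xt p ∂(muGH m n)) ^ 2
                / (2 * (2 * Cw ^ 2 + σ ^ 2)))
            - Real.exp (-(ε₂ ^ 2 * n) / (2 * σ ^ 2))
            - Real.exp (-(ε₃ ^ 2 * n) / (2 * (Cw ^ 2 + σ ^ 2)))
            - Real.exp (-(εC * n))) :=
  fun _ h₁ _ h₂ _ h₃ ↦ lasso_stmt13_general hσ.ne' hCw.le hmin
    (Set.Ioo_subset_Icc_self h₁) h₂.1.le h₃.1.le
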